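/- arXiv:1008.0144 — 2 statements merged into one kernel-verified Lean document; each statement's English description precedes it below -/
import Mathlib

section
/- Let ν > −1, N ≥ 1, and let 0 < a₁ < a₂ < ⋯ < a_N be distinct positive reals. For 0 ≤ i ≤ N−1 define P^{(i)}(y) = ∫₀^∞ (1/2) (u/y)^{ν/2} J_ν(√(uy)) e^{(y−u)/2} ∏_{ℓ=1}^{i} (−u − a_ℓ) du, and for 0 ≤ k ≤ N−1 define Q^{(k)}(y) = Σ_{ℓ=1}^{k+1} [ (1/2) (y/a_ℓ)^{ν/2} e^{−(a_ℓ+y)/2} I_ν(√(a_ℓ y)) / ∏_{1≤j≤k+1, j≠ℓ} (a_ℓ − a_j) ], for y > 0. Then the biorthonormality relation ∫₀^∞ P^{(i)}(y) Q^{(k)}(y) dy = δ_{ik} holds for all 0 ≤ i, k ≤ N−1. -/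
open MeasureTheory Real

/-- The Bessel function of the first kind `J_ν(z)`. -/
noncomputable def besselJ (ν z : ℝ) : ℝ :=
  ∑' n : ℕ, ((-1 : ℝ) ^ n / (Real.Gamma ((n : ℝ) + 1) * Real.Gamma ((n : ℝ) + 1 + ν))) *
    (z / 2) ^ (2 * (n : ℝ) + ν)

/-- The modified Bessel function of the first kind `I_ν(z)`. -/
noncomputable def besselI (ν z : ℝ) : ℝ :=
  ∑' n : ℕ, ((1 : ℝ) / (Real.Gamma ((n : ℝ) + 1) * Real.Gamma ((n : ℝ) + 1 + ν))) *
    (z / 2) ^ (2 * (n : ℝ) + ν)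

/-- Type-II multiple orthogonal polynomial `P^{(i)}` built from the first `i`
points of the configuration `a`, in its real integral representation. -/
noncomputable def typeIIP (ν : ℝ) {N : ℕ} (a : Fin N → ℝ) (i : Fin N) (y : ℝ) : ℝ :=
  ∫ u in Set.Ioi (0 : ℝ),
    (1 / 2) * (u / y) ^ (ν / 2) * besselJ ν (Real.sqrt (u * y)) * Real.exp ((y - u) / 2) *
      ∏ ℓ ∈ Finset.Iio i, (-u - a ℓ)

/-- Type-I multiple orthogonal function `Q^{(k)}` built from the first `k+1`
points of the configuration `a`, in its residue-sum representation. -/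
noncomputable def typeIQ (ν : ℝ) {N : ℕ} (a : Fin N → ℝ) (k : Fin N) (y : ℝ) : ℝ :=
  ∑ ℓ ∈ Finset.Iic k,
    (1 / 2) * (y / a ℓ) ^ (ν / 2) * Real.exp (-(a ℓ + y) / 2) *
      besselI ν (Real.sqrt (a ℓ * y)) / ∏ j ∈ (Finset.Iic k).erase ℓ, (a ℓ - a j)

open Polynomial in
/-- The polynomials `B_m`, rescaled Laguerre polynomials. -/
noncomputable def lagB (ν : ℝ) : ℕ → ℝ[X]
  | 0 => 1
  | m + 1 => X * lagB ν m + C 2 * (X * derivative (lagB ν m)) + C (2 * (ν + 1 + m)) * lagB ν m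

/-- The sequences `2^m (n+ν+1)_m`. -/
noncomputable def rise (ν : ℝ) (n : ℕ) : ℕ → ℝ
  | 0 => 1
  | m + 1 => 2 * (n + ν + 1 + m) * rise ν n m

open Polynomial in
/-- Conversion to factorial basis. -/
noncomputable def facΔ (n : ℕ) : ℝ[X] →ₗ[ℝ] ℝ :=
  (Polynomial.basisMonomials ℝ).constr ℝ (fun j => 2 ^ j * (n.descFactorial j : ℝ))

open Polynomial in
lemma facΔ_X_pow (n j : ℕ) : facΔ n (X ^ j) = 2 ^ j * (n.descFactorial j : ℝ) := by
  have := (Polynomial.basisMonomials ℝ).constr_basis ℝ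
    (fun j => 2 ^ j * (n.descFactorial j : ℝ)) j
  simpa [facΔ, Polynomial.X_pow_eq_monomial] using this

lemma desc_step (n j : ℕ) :
    (n : ℝ) * n.descFactorial j = n.descFactorial (j + 1) + j * n.descFactorial j := by
  rcases lt_or_ge n j with h | h
  · simp [Nat.descFactorial_eq_zero_iff_lt.2 h]
  · rw [Nat.descFactorial_succ]
    push_cast [Nat.cast_sub h]
    ring

open Polynomial in
lemma facΔ_step (n : ℕ) (p : ℝ[X]) :
    facΔ n (X * p + C 2 * (X * derivative p)) = 2 * n * facΔ n p := by
  induction p using Polynomial.induction_on' with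
  | add p q hp hq =>
    have : (X * (p + q) + C 2 * (X * derivative (p + q)) : ℝ[X]) =
      (X * p + C 2 * (X * derivative p)) + (X * q + C 2 * (X * derivative q)) := by
      simp only [map_add]; ring
    rw [this, map_add, hp, hq, map_add]; ring
  | monomial j c =>
    have h : (X * monomial j c + C 2 * (X * derivative (monomial j c)) : ℝ[X])
        = c • X ^ (j + 1) + (2 * c * j) • X ^ j := by
      rw [← C_mul_X_pow_eq_monomial, smul_eq_C_mul, smul_eq_C_mul]
      rcases j with _ | j
      · simp
      · simp
        ring
    have h2 : (monomial j c : ℝ[X]) = c • X ^ j := by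
      rw [← C_mul_X_pow_eq_monomial, smul_eq_C_mul]
    rw [h, h2]
    simp only [map_add, map_smul, facΔ_X_pow, smul_eq_mul]
    have := desc_step n j
    linear_combination (-2 * c * 2 ^ j) * this

open Polynomial in
lemma facΔ_lagB (ν : ℝ) (n m : ℕ) : facΔ n (lagB ν m) = rise ν n m := by
  induction m with
  | zero => simpa [lagB, rise] using facΔ_X_pow n 0
  | succ m ih =>
    rw [lagB, rise, map_add, facΔ_step, ← smul_eq_C_mul, map_smul, ih, smul_eq_mul]
    ring

open Polynomial in
lemma hasSum_facΔ (z : ℝ) (p : ℝ[X]) :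
    HasSum (fun n : ℕ => (z / 2) ^ n / (n.factorial : ℝ) * facΔ n p) (Real.exp (z / 2) * p.eval z) := by
  induction p using Polynomial.induction_on' with
  | add p q hp hq =>
    simpa [mul_add] using hp.add hq
  | monomial j c =>
    have h2 : (monomial j c : ℝ[X]) = c • X ^ j := by
      rw [← C_mul_X_pow_eq_monomial, smul_eq_C_mul]
    rw [h2]
    simp only [map_smul, facΔ_X_pow, smul_eq_mul, eval_smul, eval_pow, eval_X]
    rw [← hasSum_nat_add_iff' j]
    have h0 : ∑ i ∈ Finset.range j, (z / 2) ^ i / (i.factorial : ℝ) *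
        (c * (2 ^ j * (i.descFactorial j : ℝ))) = 0 := by
      apply Finset.sum_eq_zero
      intro i hi
      simp [Nat.descFactorial_eq_zero_iff_lt.2 (Finset.mem_range.1 hi)]
    rw [h0, sub_zero]
    have h := (NormedSpace.expSeries_div_hasSum_exp (z / 2 : ℝ)).mul_left (c * z ^ j)
    rw [← Real.exp_eq_exp_ℝ] at h
    convert! h using 1
    · ext n
      have := Nat.factorial_mul_descFactorial (Nat.le_add_left j n)
      rw [Nat.add_sub_cancel] at this
      rw [← this]
      have h1 : ((n.factorial : ℕ) : ℝ) ≠ 0 := by positivity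
      have h3 : (((n + j).descFactorial j : ℕ) : ℝ) ≠ 0 := by
        have : (n + j).descFactorial j ≠ 0 := by
          rw [Ne, Nat.descFactorial_eq_zero_iff_lt]; omega
        exact_mod_cast this
      push_cast
      rw [div_pow, div_pow, pow_add, pow_add]
      field_simp
    · ring

lemma hasSum_rise (ν z : ℝ) (m : ℕ) :
    HasSum (fun n : ℕ => (z / 2) ^ n / (n.factorial : ℝ) * rise ν n m)
      (Real.exp (z / 2) * (lagB ν m).eval z) := by
  simpa only [facΔ_lagB] using hasSum_facΔ z (lagB ν m)

open Polynomial in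
/-- The operator `x^m ↦ (-1)^m B_m`. -/
noncomputable def opR (ν : ℝ) : ℝ[X] →ₗ[ℝ] ℝ[X] :=
  (Polynomial.basisMonomials ℝ).constr ℝ (fun j => (-1 : ℝ) ^ j • lagB ν j)

open Polynomial in
lemma opR_X_pow (ν : ℝ) (j : ℕ) : opR ν (X ^ j) = (-1 : ℝ) ^ j • lagB ν j := by
  have := (Polynomial.basisMonomials ℝ).constr_basis ℝ
    (fun j => (-1 : ℝ) ^ j • lagB ν j) j
  simpa [opR, Polynomial.X_pow_eq_monomial] using this

open Polynomial in
lemma opR_step (ν : ℝ) (p : ℝ[X]) :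
    opR ν (X * p + C 2 * (X * derivative p)) =
      -(X * opR ν p + C 2 * (X * derivative (opR ν p)) + C (2 * (ν + 1)) * opR ν p) := by
  induction p using Polynomial.induction_on' with
  | add p q hp hq =>
    have : (X * (p + q) + C 2 * (X * derivative (p + q)) : ℝ[X]) =
      (X * p + C 2 * (X * derivative p)) + (X * q + C 2 * (X * derivative q)) := by
      simp only [map_add]; ring
    rw [this, map_add, hp, hq, map_add, derivative_add]; ring
  | monomial j c =>
    have h : (X * monomial j c + C 2 * (X * derivative (monomial j c)) : ℝ[X])
        = c • X ^ (j + 1) + (2 * c * j) • X ^ j := by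
      rw [← C_mul_X_pow_eq_monomial, smul_eq_C_mul, smul_eq_C_mul]
      rcases j with _ | j
      · simp
      · simp
        ring
    have h2 : (monomial j c : ℝ[X]) = c • X ^ j := by
      rw [← C_mul_X_pow_eq_monomial, smul_eq_C_mul]
    rw [h, h2]
    simp only [map_add, map_smul, opR_X_pow]
    simp only [lagB, smul_eq_C_mul, derivative_C_mul, map_mul, map_add, map_pow,
      map_neg, map_one, pow_succ]
    ring

open Polynomial in
lemma opR_lagB (ν : ℝ) (m : ℕ) : opR ν (lagB ν m) = (-X) ^ m := by
  induction m with
  | zero => simpa [lagB] using opR_X_pow ν 0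
  | succ m ih =>
    rw [lagB, map_add, opR_step, ← smul_eq_C_mul (2 * (ν + 1 + m)), map_smul, ih, smul_eq_C_mul]
    rcases m with _ | m
    · simp
    · rw [derivative_pow]
      simp only [derivative_neg, derivative_X, map_mul, map_add, map_one, pow_succ,
        Nat.add_sub_cancel]
      push_cast
      simp
      ring

lemma rise_pos (ν : ℝ) (hν : -1 < ν) (n m : ℕ) : 0 < rise ν n m := by
  induction m with
  | zero => simp [rise]
  | succ m ih =>
    rw [rise]
    have : (0:ℝ) ≤ n := n.cast_nonneg
    have : (0:ℝ) ≤ m := m.cast_nonneg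
    have : 0 < (n:ℝ) + ν + 1 + m := by linarith
    positivity

lemma gamma_rise (ν : ℝ) (hν : -1 < ν) (n m : ℕ) :
    2 ^ m * Real.Gamma (n + ν + m + 1) = rise ν n m * Real.Gamma (n + 1 + ν) := by
  induction m with
  | zero => simp [rise]; ring_nf
  | succ m ih =>
    have : (0:ℝ) ≤ n := n.cast_nonneg
    have : (0:ℝ) ≤ m := m.cast_nonneg
    have h : (n:ℝ) + ν + m + 1 ≠ 0 := by linarith
    push_cast
    rw [rise, show (n:ℝ) + ν + (m + 1) + 1 = (n + ν + m + 1) + 1 by ring, Real.Gamma_add_one h,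
      pow_succ]
    linear_combination 2 * (n + ν + 1 + m) * ih

lemma integrable_tsum_aux {α : Type*} [MeasurableSpace α] {μ : Measure α} {F : ℕ → α → ℝ}
    (hF_int : ∀ i, Integrable (F i) μ) (hF_sum : Summable fun i ↦ ∫ a, ‖F i a‖ ∂μ) :
    Integrable (fun a => ∑' i, F i a) μ := by
  have this (i : ℕ) : ∫⁻ a, ‖F i a‖ₑ ∂μ = ENNReal.ofReal (∫ a, ‖F i a‖ ∂μ) := by
    rw [ofReal_integral_norm_eq_lintegral_enorm (hF_int i)]
  have hfin : ∑' i, ∫⁻ a, ‖F i a‖ₑ ∂μ ≠ ⊤ := by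
    rw [funext this]
    exact hF_sum.tsum_ofReal_ne_top
  rw [← lintegral_tsum (fun i => (hF_int i).1.enorm)] at hfin
  have hae : ∀ᵐ a ∂μ, ∑' i, ‖F i a‖ₑ < ⊤ :=
    ae_lt_top' (AEMeasurable.ennreal_tsum fun i => (hF_int i).1.enorm) hfin
  constructor
  · refine aestronglyMeasurable_of_tendsto_ae (f := fun n a => ∑ i ∈ Finset.range n, F i a) Filter.atTop
      (fun n => Finset.aestronglyMeasurable_fun_sum _ (fun i _ => (hF_int i).1)) ?_
    filter_upwards [hae] with a ha
    have : Summable (fun i => F i a) := by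
      apply Summable.of_nnnorm
      exact ENNReal.tsum_coe_ne_top_iff_summable.1 ha.ne
    exact this.hasSum.tendsto_sum_nat
  · refine lt_of_le_of_lt (lintegral_mono fun a => enorm_tsum_le_tsum_enorm) hfin.lt_top

/-- Common form of the two Bessel series. -/
noncomputable def besselS (c ν z : ℝ) : ℝ :=
  ∑' n : ℕ, (c ^ n / (Real.Gamma ((n : ℝ) + 1) * Real.Gamma ((n : ℝ) + 1 + ν))) *
    (z / 2) ^ (2 * (n : ℝ) + ν)

lemma term_eq (c ν a u : ℝ) (ha : 0 < a) (hu : 0 < u) (n m : ℕ) :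
    (1 / 2) * (u / a) ^ (ν / 2) *
      ((c ^ n / (Real.Gamma ((n : ℝ) + 1) * Real.Gamma ((n : ℝ) + 1 + ν))) *
        (Real.sqrt (u * a) / 2) ^ (2 * (n : ℝ) + ν)) * Real.exp (-u / 2) * u ^ m =
    ((1 / 2) * (c * a / 4) ^ n * 2 ^ (-ν) / (n.factorial * Real.Gamma ((n : ℝ) + 1 + ν))) *
      (u ^ (((n : ℝ) + ν + m + 1) - 1) * Real.exp (-(1 / 2 * u))) := by
  have h1 : (Real.sqrt (u * a) / 2) ^ (2 * (n : ℝ) + ν) =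
      u ^ n * a ^ n / 4 ^ n * (u ^ (ν / 2) * a ^ (ν / 2) * 2 ^ (-ν)) := by
    have hs : 0 < Real.sqrt (u * a) := Real.sqrt_pos.2 (by positivity)
    rw [Real.rpow_add (by positivity), Real.rpow_mul (by positivity)]
    congr 1
    · rw [Real.rpow_two, div_pow, Real.sq_sqrt (by positivity), Real.rpow_natCast]
      rw [div_pow, mul_pow]; norm_num
    · rw [Real.div_rpow hs.le (by norm_num), Real.sqrt_eq_rpow, ← Real.rpow_mul (by positivity),
        Real.mul_rpow hu.le ha.le, Real.rpow_neg (by norm_num), div_eq_mul_inv]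
      ring_nf
  have h2 : u ^ (((n : ℝ) + ν + m + 1) - 1) = u ^ n * u ^ m * (u ^ (ν / 2) * u ^ (ν / 2)) := by
    rw [← Real.rpow_add hu, ← Real.rpow_natCast u n, ← Real.rpow_natCast u m, ← Real.rpow_add hu,
      ← Real.rpow_add hu]
    congr 1; ring
  have h3 : 0 < a ^ (ν / 2) := by positivity
  rw [h1, h2, Real.div_rpow hu.le ha.le, Real.Gamma_nat_eq_factorial,
    show -(1 / 2 * u) = -u / 2 by ring, div_pow, mul_pow]
  field_simp

lemma coef_eq (c ν a : ℝ) (hν : -1 < ν) (n m : ℕ) :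
    ((1 / 2) * (c * a / 4) ^ n * 2 ^ (-ν) / (n.factorial * Real.Gamma ((n : ℝ) + 1 + ν))) *
      ((1 / (1 / 2 : ℝ)) ^ ((n : ℝ) + ν + m + 1) * Real.Gamma ((n : ℝ) + ν + m + 1)) =
    (c * a / 2) ^ n / n.factorial * rise ν n m := by
  have h0 : (0:ℝ) ≤ n := n.cast_nonneg
  have hG : 0 < Real.Gamma ((n : ℝ) + 1 + ν) := Real.Gamma_pos_of_pos (by linarith)
  have h := gamma_rise ν hν n m
  have h1 : (1 / (1 / 2 : ℝ)) ^ ((n : ℝ) + ν + m + 1) = 2 ^ n * 2 ^ m * 2 * 2 ^ ν := by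
    rw [one_div_one_div, Real.rpow_add (by norm_num), Real.rpow_add (by norm_num),
      Real.rpow_add (by norm_num), Real.rpow_natCast, Real.rpow_natCast, Real.rpow_one]
    ring
  have h2 : (0:ℝ) < 2 ^ ν := by positivity
  have h3 : (c * a / 2) ^ n = (c * a / 4) ^ n * 2 ^ n := by
    rw [← mul_pow]; congr 1; ring
  rw [h1, h3, Real.rpow_neg (by norm_num)]
  field_simp
  linear_combination (c * a / 4) ^ n * h

lemma kernel_integral (c ν a : ℝ) (hc : |c| = 1) (hν : -1 < ν) (ha : 0 < a) (m : ℕ) :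
    IntegrableOn (fun u => (1 / 2) * (u / a) ^ (ν / 2) * besselS c ν (Real.sqrt (u * a)) *
      Real.exp (-u / 2) * u ^ m) (Set.Ioi 0) ∧
    ∫ u in Set.Ioi (0:ℝ), (1 / 2) * (u / a) ^ (ν / 2) * besselS c ν (Real.sqrt (u * a)) *
      Real.exp (-u / 2) * u ^ m = Real.exp (c * a / 2) * (lagB ν m).eval (c * a) := by
  set K : ℝ → ℕ → ℝ := fun c n =>
    ((1 / 2) * (c * a / 4) ^ n * 2 ^ (-ν) / (n.factorial * Real.Gamma ((n : ℝ) + 1 + ν))) with hK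
  set g : ℕ → ℝ → ℝ := fun n u =>
    u ^ (((n : ℝ) + ν + m + 1) - 1) * Real.exp (-(1 / 2 * u)) with hg
  have hpos : ∀ n : ℕ, 0 < (n : ℝ) + ν + m + 1 := fun n => by
    have : (0:ℝ) ≤ n := n.cast_nonneg
    have : (0:ℝ) ≤ m := m.cast_nonneg
    linarith
  have hgi : ∀ n, ∫ u in Set.Ioi (0:ℝ), g n u =
      (1 / (1 / 2 : ℝ)) ^ ((n : ℝ) + ν + m + 1) * Real.Gamma ((n : ℝ) + ν + m + 1) := fun n =>
    Real.integral_rpow_mul_exp_neg_mul_Ioi (hpos n) (by norm_num)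
  have hgint : ∀ n, IntegrableOn (g n) (Set.Ioi 0) := fun n => by
    apply Integrable.of_integral_ne_zero
    rw [hgi]
    have := Real.Gamma_pos_of_pos (hpos n)
    positivity
  have hFint : ∀ n, Integrable (fun u => K c n * g n u) (volume.restrict (Set.Ioi 0)) :=
    fun n => (hgint n).const_mul _
  have hFi : ∀ d n, ∫ u in Set.Ioi (0:ℝ), K d n * g n u =
      (d * a / 2) ^ n / n.factorial * rise ν n m := fun d n => by
    rw [integral_const_mul, hgi, hK]
    exact coef_eq d ν a hν n m
  have hnorm : ∀ n, ∫ u in Set.Ioi (0:ℝ), ‖K c n * g n u‖ =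
      (a / 2) ^ n / n.factorial * rise ν n m := fun n => by
    rw [← one_mul a, ← hFi 1 n]
    apply setIntegral_congr_fun measurableSet_Ioi
    intro u hu
    have hu : 0 < u := hu
    have h0 : (0:ℝ) ≤ n := n.cast_nonneg
    have hG : 0 < Real.Gamma ((n : ℝ) + 1 + ν) := Real.Gamma_pos_of_pos (by linarith)
    have hgp : 0 < g n u := by simp only [hg]; positivity
    simp only [norm_mul, Real.norm_eq_abs, abs_of_pos hgp]
    congr 1
    simp only [hK]
    have hca : |c * a / 4| = 1 * a / 4 := by
      rw [abs_div, abs_mul, hc, abs_of_pos ha]; norm_num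
    rw [abs_div, abs_mul, abs_mul, abs_pow, hca,
      abs_of_pos (by positivity : (0:ℝ) < 2 ^ (-ν)), abs_of_pos (by positivity :
      0 < (n.factorial : ℝ) * Real.Gamma ((n : ℝ) + 1 + ν))]
    norm_num
  have hsum : Summable fun n => ∫ u in Set.Ioi (0:ℝ), ‖K c n * g n u‖ := by
    simp only [hnorm]
    exact (hasSum_rise ν a m).summable
  have heq : ∀ u ∈ Set.Ioi (0:ℝ), ∑' n, K c n * g n u = (1 / 2) * (u / a) ^ (ν / 2) *
      besselS c ν (Real.sqrt (u * a)) * Real.exp (-u / 2) * u ^ m := fun u hu => by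
    rw [besselS, ← tsum_mul_left, ← tsum_mul_right, ← tsum_mul_right]
    exact tsum_congr fun n => (term_eq c ν a u ha hu n m).symm
  constructor
  · exact (integrableOn_congr_fun heq measurableSet_Ioi).1 (integrable_tsum_aux hFint hsum)
  · rw [← setIntegral_congr_fun measurableSet_Ioi heq]
    have h := hasSum_integral_of_summable_integral_norm hFint hsum
    simp only [hFi] at h
    exact h.unique (hasSum_rise ν (c * a) m)

open Polynomial in
lemma P_eval (ν : ℝ) (hν : -1 < ν) (p : ℝ[X]) (y : ℝ) (hy : 0 < y) :
    ∫ u in Set.Ioi (0 : ℝ), (1 / 2) * (u / y) ^ (ν / 2) * besselJ ν (Real.sqrt (u * y)) *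
      Real.exp ((y - u) / 2) * p.eval u = ∑ m ∈ p.support, p.coeff m * (lagB ν m).eval (-y) := by
  have hK := kernel_integral (-1) ν y (by simp) hν hy
  have : ∀ u : ℝ, (1 / 2) * (u / y) ^ (ν / 2) * besselJ ν (Real.sqrt (u * y)) *
      Real.exp ((y - u) / 2) * p.eval u = ∑ m ∈ p.support, (Real.exp (y / 2) * p.coeff m) *
      ((1 / 2) * (u / y) ^ (ν / 2) * besselS (-1) ν (Real.sqrt (u * y)) *
      Real.exp (-u / 2) * u ^ m) := fun u => by
    rw [eval_eq_sum, Polynomial.sum, Finset.mul_sum]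
    refine Finset.sum_congr rfl fun m _ => ?_
    rw [show (y - u) / 2 = y / 2 + -u / 2 by ring, Real.exp_add]
    change _ * _ * besselS (-1) ν _ * _ * _ = _
    ring
  simp only [this]
  rw [integral_finsetSum _ fun m _ => (hK m).1.const_mul _]
  refine Finset.sum_congr rfl fun m _ => ?_
  rw [integral_const_mul, (hK m).2]
  have : Real.exp (y / 2) * Real.exp (-1 * y / 2) = 1 := by
    rw [← Real.exp_add]; simp; ring
  rw [neg_one_mul] at *
  linear_combination p.coeff m * (lagB ν m).eval (-y) * this

open Polynomial in
lemma Q_eval (ν : ℝ) (hν : -1 < ν) (q : ℝ[X]) (a : ℝ) (ha : 0 < a) :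
    IntegrableOn (fun y => q.eval y * ((1 / 2) * (y / a) ^ (ν / 2) * Real.exp (-(a + y) / 2) *
      besselI ν (Real.sqrt (a * y)))) (Set.Ioi 0) ∧
    ∫ y in Set.Ioi (0 : ℝ), q.eval y * ((1 / 2) * (y / a) ^ (ν / 2) * Real.exp (-(a + y) / 2) *
      besselI ν (Real.sqrt (a * y))) = ∑ m ∈ q.support, q.coeff m * (lagB ν m).eval a := by
  have hK := kernel_integral 1 ν a (by simp) hν ha
  have : ∀ y : ℝ, q.eval y * ((1 / 2) * (y / a) ^ (ν / 2) * Real.exp (-(a + y) / 2) *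
      besselI ν (Real.sqrt (a * y))) = ∑ m ∈ q.support, (Real.exp (-a / 2) * q.coeff m) *
      ((1 / 2) * (y / a) ^ (ν / 2) * besselS 1 ν (Real.sqrt (y * a)) *
      Real.exp (-y / 2) * y ^ m) := fun y => by
    have hI : besselI ν (Real.sqrt (a * y)) = besselS 1 ν (Real.sqrt (y * a)) := by
      simp only [besselI, besselS, one_pow, mul_comm a y]
    rw [eval_eq_sum, Polynomial.sum, Finset.sum_mul, hI]
    refine Finset.sum_congr rfl fun m _ => ?_
    rw [show -(a + y) / 2 = -a / 2 + -y / 2 by ring, Real.exp_add]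
    ring
  simp only [this]
  refine ⟨integrable_finsetSum _ fun m _ => (hK m).1.const_mul _, ?_⟩
  rw [integral_finsetSum _ fun m _ => (hK m).1.const_mul _]
  refine Finset.sum_congr rfl fun m _ => ?_
  rw [integral_const_mul, (hK m).2]
  have : Real.exp (-a / 2) * Real.exp (a / 2) = 1 := by
    rw [← Real.exp_add]; simp; ring
  rw [one_mul]
  linear_combination q.coeff m * (lagB ν m).eval a * this

open Polynomial in
/-- `P` as a polynomial. -/
noncomputable def polyP (ν : ℝ) (p : ℝ[X]) : ℝ[X] :=
  ∑ m ∈ p.support, p.coeff m • (lagB ν m).comp (-X)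

open Polynomial in
lemma opR_eval (ν a : ℝ) (q : ℝ[X]) :
    (opR ν q).eval a = ∑ m ∈ q.support, q.coeff m * ((-1) ^ m * (lagB ν m).eval a) := by
  conv_lhs => rw [q.as_sum_support]
  rw [map_sum, eval_finsetSum]
  refine Finset.sum_congr rfl fun m _ => ?_
  rw [← C_mul_X_pow_eq_monomial, ← smul_eq_C_mul, map_smul, opR_X_pow]
  simp

open Polynomial in
lemma comp_neg_X_eval (ν a : ℝ) (q : ℝ[X]) :
    ∑ m ∈ (q.comp (-X)).support, (q.comp (-X)).coeff m * (lagB ν m).eval a = (opR ν q).eval a := by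
  rw [opR_eval]
  have h : ∀ m, (q.comp (-X)).coeff m = (-1) ^ m * q.coeff m := fun m => by
    rw [show (-X : ℝ[X]) = C (-1) * X by simp, comp_C_mul_X_coeff]; ring
  have hs : (q.comp (-X)).support = q.support := by
    ext m; simp [mem_support_iff, h]
  rw [hs]
  refine Finset.sum_congr rfl fun m _ => ?_
  rw [h]; ring

open Polynomial in
lemma biorth_kernel (ν : ℝ) (p : ℝ[X]) (a : ℝ) :
    ∑ m ∈ (polyP ν p).support, (polyP ν p).coeff m * (lagB ν m).eval a = p.eval (-a) := by
  have : polyP ν p = (∑ m ∈ p.support, p.coeff m • lagB ν m).comp (-X) := by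
    change _ = (Polynomial.compRingHom (-X)) _
    rw [polyP, map_sum]
    simp [Polynomial.coe_compRingHom_apply, smul_comp]
  rw [this, comp_neg_X_eval, map_sum, eval_finsetSum, eval_eq_sum, Polynomial.sum]
  refine Finset.sum_congr rfl fun m _ => ?_
  rw [map_smul, opR_lagB]
  simp

open Polynomial in
lemma polyP_eval (ν y : ℝ) (p : ℝ[X]) :
    (polyP ν p).eval y = ∑ m ∈ p.support, p.coeff m * (lagB ν m).eval (-y) := by
  simp [polyP, eval_finsetSum]

lemma divided_diff {N : ℕ} (a : Fin N → ℝ) (ha : Function.Injective a) (i k : Fin N) :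
    ∑ ℓ ∈ Finset.Iic k, (∏ j ∈ Finset.Iio i, (a ℓ - a j)) /
      ∏ j ∈ (Finset.Iic k).erase ℓ, (a ℓ - a j) = if i = k then 1 else 0 := by
  rcases lt_or_ge k i with h | h
  · rw [if_neg h.ne']
    refine Finset.sum_eq_zero fun ℓ hℓ => ?_
    rw [Finset.prod_eq_zero (i := ℓ) (Finset.mem_Iio.2 ((Finset.mem_Iic.1 hℓ).trans_lt h)) (sub_self _),
      zero_div]
  · set P : Polynomial ℝ := ∏ j ∈ Finset.Iio i, (Polynomial.X - Polynomial.C (a j)) with hP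
    have hm : P.Monic := Polynomial.monic_prod_X_sub_C a _
    have hd : P.natDegree = i := by
      rw [hP, Polynomial.natDegree_finsetProd_X_sub_C_eq_card]; simp
    have hdeg : P.degree < ((Finset.Iic k).card : ℕ) := by
      rw [Polynomial.degree_eq_natDegree hm.ne_zero, hd, Fin.card_Iic]
      have : (i:ℕ) ≤ k := h
      exact_mod_cast Nat.lt_succ_of_le this
    have := Lagrange.coeff_eq_sum (s := Finset.Iic k) (v := a) ha.injOn hdeg
    have he : ∀ ℓ, P.eval (a ℓ) = ∏ j ∈ Finset.Iio i, (a ℓ - a j) := fun ℓ => by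
      rw [hP, Polynomial.eval_prod]; simp
    simp only [he] at this
    rw [← this, Fin.card_Iic, Nat.add_sub_cancel]
    split_ifs with hik
    · rw [← hik, ← hd]; exact hm.coeff_natDegree
    · apply Polynomial.coeff_eq_zero_of_natDegree_lt
      rw [hd]
      exact lt_of_le_of_ne h (fun e => hik (Fin.ext e))

/-- Biorthonormality of the type-II and type-I multiple orthogonal functions:
`∫₀^∞ P^{(i)}(y) Q^{(k)}(y) dy = δ_{ik}`. -/
theorem typeII_typeI_biorthonormal
    (ν : ℝ) (hν : -1 < ν) (N : ℕ) (hN : 1 ≤ N)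
    (a : Fin N → ℝ) (hapos : ∀ ℓ, 0 < a ℓ) (hamono : StrictMono a)
    (i k : Fin N) :
    ∫ y in Set.Ioi (0 : ℝ), typeIIP ν a i y * typeIQ ν a k y
      = if i = k then 1 else 0 := by

  set p : Polynomial ℝ := ∏ ℓ ∈ Finset.Iio i, (-Polynomial.X - Polynomial.C (a ℓ)) with hp
  have hpe : ∀ u, p.eval u = ∏ ℓ ∈ Finset.Iio i, (-u - a ℓ) := fun u => by
    rw [hp, Polynomial.eval_prod]; simp
  have hP : ∀ y ∈ Set.Ioi (0:ℝ), typeIIP ν a i y * typeIQ ν a k y =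
      ∑ ℓ ∈ Finset.Iic k, ((polyP ν p).eval y * ((1 / 2) * (y / a ℓ) ^ (ν / 2) *
        Real.exp (-(a ℓ + y) / 2) * besselI ν (Real.sqrt (a ℓ * y)))) *
        (∏ j ∈ (Finset.Iic k).erase ℓ, (a ℓ - a j))⁻¹ := fun y hy => by
    have h := P_eval ν hν p y hy
    simp only [hpe] at h
    rw [typeIIP, h, ← polyP_eval, typeIQ, Finset.mul_sum]
    refine Finset.sum_congr rfl fun ℓ _ => ?_
    rw [div_eq_mul_inv]; ring
  rw [setIntegral_congr_fun measurableSet_Ioi hP,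
    integral_finsetSum _ fun ℓ _ => (Q_eval ν hν (polyP ν p) (a ℓ) (hapos ℓ)).1.mul_const _]
  rw [← divided_diff a hamono.injective i k]
  refine Finset.sum_congr rfl fun ℓ _ => ?_
  rw [integral_mul_const, (Q_eval ν hν (polyP ν p) (a ℓ) (hapos ℓ)).2, biorth_kernel, hpe,
    div_eq_mul_inv]
  simp
end

section
/- Let ν > −1, N ≥ 1, let 0 < a₁ < ⋯ < a_N be distinct positive reals, let M ≥ 1, let 0 < t₁ < ⋯ < t_M, let 1 ≤ N_m ≤ N for each 1 ≤ m ≤ M, and for each m let x₁^{(m)}, …, x_{N_m}^{(m)} be distinct positive reals. Define the space-time correlation kernel K(s, x; t, y) = Σ_{ℓ=1}^N p^{(ν)}(s, x | a_ℓ) · ∫₀^∞ [ ∏_{k ≠ ℓ} (a_k + v)/(a_k − a_ℓ) ] · q^{(ν)}_t(v, y) dv − 1(s > t) · p^{(ν)}(s−t, x | y). Define the multitime density of the noncolliding BESQ^{(ν)} process, for configurations (x₁^{(m)}, …, x_N^{(m)}) ∈ (0,∞)^N at each time t_m, by p(x^{(1)}, …, x^{(M)}) = ∏_{1≤i<j≤N}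 (x_j^{(M)} − x_i^{(M)}) · ∏_{m=1}^{M−1} det_{1≤i,j≤N}[ p^{(ν)}(t_{m+1} − t_m, x_i^{(m+1)} | x_j^{(m)}) ] · det_{1≤i,j≤N}[ p^{(ν)}(t₁, x_i^{(1)} | a_j) ] / ∏_{1≤i<j≤N} (a_j − a_i). Then [ ∏_{m=1}^M 1/(N − N_m)! ] · ∫ p(x^{(1)}, …, x^{(M)}) ∏_{m=1}^M dx_{N_m+1}^{(m)} ⋯ dx_N^{(m)} (each integrated coordinate over (0, ∞)) = det[ K(t_m, x_i^{(m)}; t_n, x_j^{(n)}) ], the determinant of the (Σ_m N_m) × (Σ_m N_m) block matrix with rows indexed by (m, i), 1 ≤ i ≤ N_m, and columns by (n, j), 1 ≤ j ≤ N_n. -/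
open MeasureTheory Real

/-- The BESQ^{(ν)} transition probability density `p^{(ν)}(t, y | x)`. -/
noncomputable def besqP (ν t y x : ℝ) : ℝ :=
  (1 / (2 * t)) * (y / x) ^ (ν / 2) * Real.exp (-(x + y) / (2 * t)) *
    besselI ν (Real.sqrt (x * y) / t)

/-- The kernel `q^{(ν)}_t(v, y)`, real form of `p^{(ν)}(−t, −v | y)`. -/
noncomputable def besqQ (ν t v y : ℝ) : ℝ :=
  (1 / (2 * t)) * (v / y) ^ (ν / 2) * Real.exp ((y - v) / (2 * t)) *
    besselJ ν (Real.sqrt (v * y) / t)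

/-- The space-time correlation kernel
`K(s, x; t, y) = Σ_ℓ p^{(ν)}(s, x|a_ℓ) ∫₀^∞ ∏_{k≠ℓ} (a_k+v)/(a_k−a_ℓ) q^{(ν)}_t(v, y) dv
  − 1(s>t) p^{(ν)}(s−t, x|y)`. -/
noncomputable def corrK (ν : ℝ) {N : ℕ} (a : Fin N → ℝ) (s x t y : ℝ) : ℝ :=
  (∑ ℓ : Fin N, besqP ν s x (a ℓ) *
      ∫ v in Set.Ioi (0 : ℝ),
        (∏ k ∈ Finset.univ.erase ℓ, ((a k + v) / (a k - a ℓ))) * besqQ ν t v y) -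
    (if t < s then besqP ν (s - t) x y else 0)

/-- The Vandermonde product `h_N(x) = ∏_{i<j} (x_j − x_i)`. -/
noncomputable def vdm {N : ℕ} (x : Fin N → ℝ) : ℝ :=
  ∏ i : Fin N, ∏ j ∈ Finset.Ioi i, (x j - x i)

/-- The full configuration at time `t_m`: the first `N_m` coordinates are the
correlation points `x m i`, the remaining ones are the integration variables. -/
noncomputable def fullConfig (N M : ℕ) (Nm : ℕ → ℕ) (x : ℕ → ℕ → ℝ)
    (z : ((m : Fin M) × Fin (N - Nm m)) → ℝ) (m : Fin M) : Fin N → ℝ :=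
  fun i => if h : (i : ℕ) < Nm m then x m i
    else z ⟨m, ⟨(i : ℕ) - Nm m, by have := i.isLt; omega⟩⟩



theorem em_det_border_aux {R : Type*} [CommRing R] [IsDomain R] {α : Type*} [Fintype α] [DecidableEq α]
    (A : Matrix α α R) (hA : A.det ≠ 0) (b : Matrix α Unit R) (c : Matrix Unit α R) (d : Matrix Unit Unit R) :
    (Matrix.fromBlocks A b c d).det = A.det * d () () - (c * A.adjugate * b) () () := by
  have h : Matrix.fromBlocks A b c d * Matrix.fromBlocks 1 (-(A.adjugate * b)) 0 (A.det • (1 : Matrix Unit Unit R))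
      = Matrix.fromBlocks A 0 c (A.det • d - c * A.adjugate * b) := by
    rw [Matrix.fromBlocks_multiply]
    congr 1
    · simp
    · simp [← Matrix.mul_assoc, Matrix.mul_adjugate]
    · simp
    · simp [← Matrix.mul_assoc]
      abel
  have h2 := congrArg Matrix.det h
  rw [Matrix.det_mul, Matrix.det_fromBlocks_zero₂₁, Matrix.det_fromBlocks_zero₁₂] at h2
  simp only [Matrix.det_one, one_mul, Matrix.one_apply_eq, mul_one,
    Matrix.det_unique, PUnit.default_eq_unit, Matrix.sub_apply, Matrix.smul_apply, smul_eq_mul] at h2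
  rw [mul_comm] at h2
  exact mul_left_cancel₀ hA h2

theorem em_det_border {α : Type*} [Fintype α] [DecidableEq α]
    (A : Matrix α α ℝ) (b : Matrix α Unit ℝ) (c : Matrix Unit α ℝ) (d : Matrix Unit Unit ℝ) :
    (Matrix.fromBlocks A b c d).det = A.det * d () () - (c * A.adjugate * b) () () := by
  open Polynomial in
  let C' : ℝ →+* ℝ[X] := Polynomial.C
  let A' : Matrix α α ℝ[X] := Matrix.charmatrix (-A)
  have hA' : A'.det ≠ 0 := (Matrix.charpoly_monic (-A)).ne_zero
  have h := em_det_border_aux A' hA' (b.map C') (c.map C') (d.map C')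
  let e : ℝ[X] →+* ℝ := Polynomial.evalRingHom 0
  have hA0 : e.mapMatrix A' = A := by
    ext i j
    by_cases hij : i = j
    · subst hij; simp [A', e]
    · simp [A', e, hij]
  have hA0' : A'.map e = A := hA0
  have hb : (b.map C').map e = b := by ext; simp [C', e]
  have hc : (c.map C').map e = c := by ext; simp [C', e]
  have hd : (d.map C').map e = d := by ext; simp [C', e]
  have h2 := congrArg e h
  rw [RingHom.map_sub, RingHom.map_mul, RingHom.map_det, RingHom.map_det, hA0] at h2
  have e1 : e.mapMatrix (Matrix.fromBlocks A' (b.map C') (c.map C') (d.map C')) = Matrix.fromBlocks A b c d := by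
    rw [RingHom.mapMatrix_apply, Matrix.fromBlocks_map, hA0', hb, hc, hd]
  have e2 : e ((c.map C' * A'.adjugate * b.map C') () ()) = (c * A.adjugate * b) () () := by
    have : ((c.map C' * A'.adjugate * b.map C').map e) = c * A.adjugate * b := by
      rw [Matrix.map_mul, Matrix.map_mul, hb, hc]
      congr 2
      have := RingHom.map_adjugate e A'
      rw [hA0] at this
      exact this
    rw [← this]; rfl
  have e3 : e (d.map C' () ()) = d () () := by simp [C', e]
  rw [e1, e2, e3] at h2
  exact h2

/-- algebraic Eynard-Mehta: full determinant factorization -/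
theorem em_det_full {M N : ℕ} (Φ Ψ : Fin (M+1) → Matrix (Fin N) (Fin N) ℝ)
    (L : Fin (M+1) → Fin (M+1) → Matrix (Fin N) (Fin N) ℝ) :
    (Matrix.of fun p q : Fin (M+1) × Fin N =>
      (∑ ℓ, Φ p.1 p.2 ℓ * Ψ q.1 ℓ q.2) - if q.1 < p.1 then L p.1 q.1 p.2 q.2 else 0).det
    = (Ψ (Fin.last M)).det * (∏ m : Fin M, (L m.succ m.castSucc).det) * (Φ 0).det := by
  let ΦB : Matrix (Fin (M+1) × Fin N) (Fin N) ℝ := Matrix.of fun p ℓ => - Φ p.1 p.2 ℓ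
  let ΨB : Matrix (Fin N) (Fin (M+1) × Fin N) ℝ := Matrix.of fun ℓ q => Ψ q.1 ℓ q.2
  let D : Matrix (Fin (M+1) × Fin N) (Fin (M+1) × Fin N) ℝ :=
    Matrix.of fun p q => if q.1 < p.1 then - L p.1 q.1 p.2 q.2 else 0
  have h1 : (Matrix.of fun p q : Fin (M+1) × Fin N =>
      (∑ ℓ, Φ p.1 p.2 ℓ * Ψ q.1 ℓ q.2) - if q.1 < p.1 then L p.1 q.1 p.2 q.2 else 0)
      = D - ΦB * ΨB := by
    ext p q
    simp only [Matrix.of_apply, Matrix.sub_apply, Matrix.mul_apply, D, ΦB, ΨB]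
    split_ifs <;> simp [Finset.sum_neg_distrib] <;> ring
  rw [h1, ← Matrix.det_fromBlocks_one₁₁]
  let T : Matrix (Fin (M+2) × Fin N) (Fin (M+2) × Fin N) ℝ := Matrix.of fun p q =>
    (Fin.lastCases (motive := fun _ => ℝ)
      (Fin.cases (motive := fun _ => ℝ) ((1 : Matrix (Fin N) (Fin N) ℝ) p.2 q.2) (fun n => Ψ n p.2 q.2) q.1)
      (fun m => Fin.cases (motive := fun _ => ℝ) (-Φ m p.2 q.2)
        (fun n => if n < m then - L m n p.2 q.2 else 0) q.1) p.1)
  let ce : (Fin N ⊕ Fin (M+1) × Fin N) ≃ Fin (M+2) × Fin N :=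
    { toFun := Sum.elim (fun i => (0, i)) (fun p => (p.1.succ, p.2))
      invFun := fun p => Fin.cases (motive := fun _ => Fin N ⊕ Fin (M+1) × Fin N) (Sum.inl p.2) (fun m => Sum.inr (m, p.2)) p.1
      left_inv := by rintro (i | ⟨m, i⟩) <;> simp
      right_inv := by
        rintro ⟨m, i⟩
        refine Fin.cases ?_ (fun m => ?_) m <;> simp }
  let pr : Equiv.Perm (Fin (M+2) × Fin N) := Equiv.prodCongrLeft (fun _ => (finRotate (M+2))⁻¹)
  have hr0 : (finRotate (M+2)).symm 0 = Fin.last (M+1) := by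
    rw [Equiv.symm_apply_eq, finRotate_last]
  have hrs : ∀ m : Fin (M+1), (finRotate (M+2)).symm m.succ = m.castSucc := by
    intro m
    rw [Equiv.symm_apply_eq, finRotate_apply]
    simp
  have h2 : Matrix.fromBlocks 1 ΨB ΦB D = (T.submatrix pr id).submatrix ce ce := by
    ext p q
    have hp0 : ∀ i, pr (0, i) = (Fin.last (M+1), i) := fun i => Prod.ext hr0 rfl
    have hps : ∀ (m : Fin (M+1)) i, pr (m.succ, i) = (m.castSucc, i) := fun m i => Prod.ext (hrs m) rfl
    have hc0 : ∀ i, ce (Sum.inl i) = (0, i) := fun i => rfl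
    have hcs : ∀ m i, ce (Sum.inr (m, i)) = (m.succ, i) := fun m i => rfl
    rcases p with i | ⟨m, i⟩ <;> rcases q with j | ⟨n, j⟩ <;>
      simp only [Matrix.submatrix_apply, hc0, hcs, hp0, hps, id, T, Matrix.of_apply,
        Fin.lastCases_last, Fin.lastCases_castSucc, Fin.cases_zero, Fin.cases_succ] <;> rfl
  rw [h2, Matrix.det_submatrix_equiv_self, Matrix.det_permute]
  have hsign : Equiv.Perm.sign pr = (-1) ^ ((M+1) * N) := by
    simp only [pr]
    rw [Equiv.Perm.sign_prodCongrLeft]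
    simp only [Equiv.Perm.sign_inv, sign_finRotate, Finset.prod_const, Finset.card_univ, Fintype.card_fin]
    rw [← pow_mul]; simp
  have hbt : T.BlockTriangular (fun p => OrderDual.toDual p.1) := by
    rintro ⟨m, i⟩ ⟨n, j⟩ h
    simp only [OrderDual.toDual_lt_toDual] at h
    revert h
    refine Fin.lastCases ?_ (fun m => ?_) m <;> refine Fin.cases ?_ (fun n => ?_) n
    · intro h; simp at h
    · intro h; exact absurd h (not_lt.2 (Fin.le_last _))
    · intro h; simp at h
    · intro h
      have : ¬ n < m := by
        rw [Fin.lt_def] at h ⊢; simp at h; omega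
      simp [T, this]
  have hTdet : T.det = ∏ k : Fin (M+2), (Matrix.of fun i j : Fin N => T (k, i) (k, j)).det := by
    rw [hbt.det_fintype]
    refine Fintype.prod_equiv OrderDual.ofDual _ _ ?_
    intro k
    let ee : Fin N ≃ {p : Fin (M+2) × Fin N // OrderDual.toDual p.1 = k} :=
      { toFun := fun i => ⟨(OrderDual.ofDual k, i), rfl⟩
        invFun := fun p => p.1.2
        left_inv := fun i => rfl
        right_inv := by
          rintro ⟨⟨m, i⟩, h⟩
          subst h; rfl }
    rw [← Matrix.det_submatrix_equiv_self ee]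
    rfl
  rw [hTdet, Fin.prod_univ_castSucc, Fin.prod_univ_succ]
  have b0 : (Matrix.of fun i j : Fin N => T (Fin.castSucc 0, i) (Fin.castSucc 0, j)) = - Φ 0 := by
    ext i j
    simp only [T, Matrix.of_apply, Fin.lastCases_castSucc, Matrix.neg_apply]
    rfl
  have bm : ∀ m : Fin M, (Matrix.of fun i j : Fin N => T (Fin.castSucc m.succ, i) (Fin.castSucc m.succ, j))
      = - L m.succ m.castSucc := by
    intro m
    ext i j
    simp only [T, Matrix.of_apply, Fin.lastCases_castSucc, Matrix.neg_apply]
    rw [← Fin.succ_castSucc, Fin.cases_succ, if_pos (by simp [Fin.lt_def])]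
  have bl : (Matrix.of fun i j : Fin N => T (Fin.last (M+1), i) (Fin.last (M+1), j))
      = Ψ (Fin.last M) := by
    ext i j
    simp only [T, Matrix.of_apply, Fin.lastCases_last]
    rw [← Fin.succ_last, Fin.cases_succ]
  rw [b0, bl, Finset.prod_congr rfl (fun m _ => by rw [bm m]), hsign]
  simp only [Matrix.det_neg, Fintype.card_fin, Finset.prod_mul_distrib, Finset.prod_const,
    Finset.card_univ]
  push_cast
  have : ((-1:ℝ)) ^ ((M+1)*N) * ((-1)^N * ((-1)^N)^M) = 1 := by
    rw [← pow_mul, ← pow_add, ← pow_add]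
    apply Even.neg_one_pow
    exact ⟨(M+1)*N, by ring⟩
  linear_combination ((Ψ (Fin.last M)).det * (∏ m : Fin M, (L m.succ m.castSucc).det) * (Φ 0).det) * this


noncomputable def emK {M N : ℕ} (φ ψ : Fin M → Fin N → ℝ → ℝ) (P : Fin M → Fin M → ℝ → ℝ → ℝ)
    (p q : Fin M × ℝ) : ℝ :=
  (∑ ℓ, φ p.1 ℓ p.2 * ψ q.1 ℓ q.2) - if q.1 < p.1 then P p.1 q.1 p.2 q.2 else 0

noncomputable def emMat {M N : ℕ} (φ ψ : Fin M → Fin N → ℝ → ℝ) (P : Fin M → Fin M → ℝ → ℝ → ℝ)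
    {ι : Type*} (pt : ι → Fin M × ℝ) : Matrix ι ι ℝ :=
  Matrix.of fun i j => emK φ ψ P (pt i) (pt j)

def emCnt {M : ℕ} {ι : Type*} [Fintype ι] (s : ι → Fin M) (r : Fin M) : ℕ :=
  ∑ i, if s i = r then 1 else 0

structure EMHyp {M N : ℕ} (μ : Measure ℝ) (S : Set ℝ) (φ ψ : Fin M → Fin N → ℝ → ℝ)
    (P : Fin M → Fin M → ℝ → ℝ → ℝ) (f g : Fin M → ℝ → ℝ) : Prop where
  hS : ∀ᵐ z ∂μ, z ∈ S
  f_nonneg : ∀ m, ∀ x ∈ S, 0 ≤ f m x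
  g_nonneg : ∀ m, ∀ x ∈ S, 0 ≤ g m x
  φ_le : ∀ m ℓ, ∀ x ∈ S, |φ m ℓ x| ≤ f m x
  ψ_le : ∀ m ℓ, ∀ x ∈ S, |ψ m ℓ x| ≤ g m x
  P_le : ∀ m n, n < m → ∀ x ∈ S, ∀ y ∈ S, |P m n x y| ≤ f m x * g n y
  fg_int : ∀ m, Integrable (fun x => f m x * g m x) μ
  φ_meas : ∀ m ℓ, Measurable (φ m ℓ)
  ψ_meas : ∀ m ℓ, Measurable (ψ m ℓ)
  P_meas : ∀ m n, Measurable (fun z : ℝ × ℝ => P m n z.1 z.2)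
  h1 : ∀ m k ℓ, ∫ z, ψ m ℓ z * φ m k z ∂μ = if ℓ = k then 1 else 0
  h2 : ∀ m n, n < m → ∀ ℓ, ∀ x ∈ S, ∫ z, P m n x z * φ n ℓ z ∂μ = φ m ℓ x
  h3 : ∀ m n, n < m → ∀ ℓ, ∀ y ∈ S, ∫ z, ψ m ℓ z * P m n z y ∂μ = ψ n ℓ y
  h4 : ∀ m r n, n < r → r < m → ∀ x ∈ S, ∀ y ∈ S, ∫ z, P m r x z * P r n z y ∂μ = P m n x y

namespace EMHyp
variable {M N : ℕ} {μ : Measure ℝ} {S : Set ℝ} {φ ψ : Fin M → Fin N → ℝ → ℝ}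
    {P : Fin M → Fin M → ℝ → ℝ → ℝ} {f g : Fin M → ℝ → ℝ}

theorem int_mul (H : EMHyp μ S φ ψ P f g) (r : Fin M) (u v : ℝ → ℝ) (hu : Measurable u) (hv : Measurable v)
    (c d : ℝ) (hc : ∀ z ∈ S, |u z| ≤ c * g r z) (hd : ∀ z ∈ S, |v z| ≤ d * f r z) :
    Integrable (fun z => u z * v z) μ := by
  refine Integrable.mono' ((H.fg_int r).const_mul (c * d)) (hu.mul hv).aestronglyMeasurable ?_
  filter_upwards [H.hS] with z hz
  rw [norm_mul, Real.norm_eq_abs, Real.norm_eq_abs]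
  calc |u z| * |v z| ≤ (c * g r z) * (d * f r z) :=
        mul_le_mul (hc z hz) (hd z hz) (abs_nonneg _) ((abs_nonneg _).trans (hc z hz))
    _ = _ := by ring

theorem comp (H : EMHyp μ S φ ψ P f g) (p q : Fin M × ℝ) (hp : p.2 ∈ S) (hq : q.2 ∈ S) (r : Fin M) :
    Integrable (fun z => emK φ ψ P p (r, z) * emK φ ψ P (r, z) q) μ ∧
    ∫ z, emK φ ψ P p (r, z) * emK φ ψ P (r, z) q ∂μ =
      ((if p.1 ≤ r then 1 else 0) - (if q.1 < r then 1 else 0)) * emK φ ψ P p q := by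
  set a1 : ℝ → ℝ := fun z => ∑ ℓ, φ p.1 ℓ p.2 * ψ r ℓ z with ha1
  set a2 : ℝ → ℝ := fun z => if r < p.1 then P p.1 r p.2 z else 0 with ha2
  set b1 : ℝ → ℝ := fun z => ∑ ℓ, φ r ℓ z * ψ q.1 ℓ q.2 with hb1
  set b2 : ℝ → ℝ := fun z => if q.1 < r then P r q.1 z q.2 else 0 with hb2
  have mψ := H.ψ_meas
  have mφ := H.φ_meas
  have mPx : ∀ m n x, Measurable (fun z => P m n x z) := fun m n x =>
    (H.P_meas m n).comp measurable_prodMk_left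
  have mPy : ∀ m n y, Measurable (fun z => P m n z y) := fun m n y =>
    (H.P_meas m n).comp measurable_prodMk_right
  have ma1 : Measurable a1 := Finset.measurable_sum _ fun ℓ _ => (mψ r ℓ).const_mul _
  have mb1 : Measurable b1 := Finset.measurable_sum _ fun ℓ _ => (mφ r ℓ).mul_const _
  have ma2 : Measurable a2 := by
    rw [ha2]; split_ifs
    · exact mPx _ _ _
    · exact measurable_const
  have mb2 : Measurable b2 := by
    rw [hb2]; split_ifs
    · exact mPy _ _ _
    · exact measurable_const
  have la1 : ∀ z ∈ S, |a1 z| ≤ (∑ ℓ, |φ p.1 ℓ p.2|) * g r z := by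
    intro z hz
    rw [Finset.sum_mul]
    refine (Finset.abs_sum_le_sum_abs _ _).trans (Finset.sum_le_sum fun ℓ _ => ?_)
    rw [abs_mul]
    exact mul_le_mul_of_nonneg_left (H.ψ_le _ _ _ hz) (abs_nonneg _)
  have lb1 : ∀ z ∈ S, |b1 z| ≤ (∑ ℓ, |ψ q.1 ℓ q.2|) * f r z := by
    intro z hz
    rw [Finset.sum_mul]
    refine (Finset.abs_sum_le_sum_abs _ _).trans (Finset.sum_le_sum fun ℓ _ => ?_)
    rw [abs_mul, mul_comm]
    exact mul_le_mul_of_nonneg_left (H.φ_le _ _ _ hz) (abs_nonneg _)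
  have la2 : ∀ z ∈ S, |a2 z| ≤ f p.1 p.2 * g r z := by
    intro z hz
    simp only [ha2]
    split_ifs with h
    · exact H.P_le _ _ h _ hp _ hz
    · simpa using mul_nonneg (H.f_nonneg _ _ hp) (H.g_nonneg _ _ hz)
  have lb2 : ∀ z ∈ S, |b2 z| ≤ g q.1 q.2 * f r z := by
    intro z hz
    simp only [hb2]
    rw [mul_comm]
    split_ifs with h
    · exact H.P_le _ _ h _ hz _ hq
    · simpa using mul_nonneg (H.f_nonneg _ _ hz) (H.g_nonneg _ _ hq)
  have i11 := H.int_mul r a1 b1 ma1 mb1 _ _ la1 lb1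
  have i12 := H.int_mul r a1 b2 ma1 mb2 _ _ la1 lb2
  have i21 := H.int_mul r a2 b1 ma2 mb1 _ _ la2 lb1
  have i22 := H.int_mul r a2 b2 ma2 mb2 _ _ la2 lb2
  have eqf : (fun z => emK φ ψ P p (r, z) * emK φ ψ P (r, z) q)
      = fun z => ((a1 z * b1 z - a1 z * b2 z) - a2 z * b1 z) + a2 z * b2 z := by
    funext z
    simp only [emK, ha1, ha2, hb1, hb2]; ring
  set s : ℝ := ∑ ℓ, φ p.1 ℓ p.2 * ψ q.1 ℓ q.2 with hs
  have lψ : ∀ ℓ, ∀ z ∈ S, |ψ r ℓ z| ≤ 1 * g r z := fun ℓ z hz => by simpa using H.ψ_le r ℓ z hz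
  have lφ : ∀ ℓ, ∀ z ∈ S, |φ r ℓ z| ≤ 1 * f r z := fun ℓ z hz => by simpa using H.φ_le r ℓ z hz
  have e11 : ∫ z, a1 z * b1 z ∂μ = s := by
    have : ∀ z, a1 z * b1 z = ∑ ℓ, ∑ k, (φ p.1 ℓ p.2 * ψ q.1 k q.2) * (ψ r ℓ z * φ r k z) := by
      intro z
      simp only [ha1, hb1, Finset.sum_mul_sum]
      refine Finset.sum_congr rfl fun _ _ => Finset.sum_congr rfl fun _ _ => by ring
    simp_rw [this]
    have hi : ∀ ℓ k, Integrable (fun z => (φ p.1 ℓ p.2 * ψ q.1 k q.2) * (ψ r ℓ z * φ r k z)) μ :=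
      fun ℓ k => (H.int_mul r _ _ (mψ r ℓ) (mφ r k) 1 1 (lψ ℓ) (lφ k)).const_mul _
    rw [integral_finsetSum _ (fun ℓ _ => integrable_finsetSum _ fun k _ => hi ℓ k)]
    simp_rw [integral_finsetSum _ (fun k _ => hi _ k), integral_const_mul, H.h1]
    simp [hs]
  have e12 : ∫ z, a1 z * b2 z ∂μ = if q.1 < r then s else 0 := by
    simp only [hb2]
    split_ifs with h
    · simp only [hb2, if_pos h] at mb2 lb2
      simp only [ha1, Finset.sum_mul, mul_assoc]
      rw [integral_finsetSum _ (fun ℓ _ =>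
        (H.int_mul r _ _ (mψ r ℓ) mb2 1 _ (lψ ℓ) lb2).const_mul _)]
      simp_rw [integral_const_mul]
      refine Finset.sum_congr rfl fun ℓ _ => ?_
      rw [H.h3 _ _ h _ _ hq]
    · simp
  have e21 : ∫ z, a2 z * b1 z ∂μ = if r < p.1 then s else 0 := by
    simp only [ha2]
    split_ifs with h
    · simp only [ha2, if_pos h] at ma2 la2
      simp only [hb1, Finset.mul_sum, ← mul_assoc]
      rw [integral_finsetSum _ (fun ℓ _ =>
        (H.int_mul r _ _ ma2 (mφ r ℓ) _ 1 la2 (lφ ℓ)).mul_const _)]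
      simp_rw [integral_mul_const]
      refine Finset.sum_congr rfl fun ℓ _ => ?_
      rw [H.h2 _ _ h _ _ hp]
    · simp
  have e22 : ∫ z, a2 z * b2 z ∂μ = if r < p.1 then (if q.1 < r then P p.1 q.1 p.2 q.2 else 0) else 0 := by
    simp only [ha2, hb2]
    split_ifs with h h'
    · exact H.h4 _ _ _ h' h _ hp _ hq
    all_goals simp
  rw [eqf]
  refine ⟨((i11.sub i12).sub i21).add i22, ?_⟩
  have j1 : Integrable (fun z => a1 z * b1 z - a1 z * b2 z) μ := i11.sub i12
  have j2 : Integrable (fun z => a1 z * b1 z - a1 z * b2 z - a2 z * b1 z) μ := j1.sub i21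
  rw [integral_add j2 i22, integral_sub j1 i21, integral_sub i11 i12,
    e11, e12, e21, e22]
  simp only [emK, ← hs]
  by_cases h1 : r < p.1 <;> by_cases h2 : q.1 < r
  · simp [h1, h2, not_le.2 h1, h2.trans h1]; ring
  · simp [h1, h2, not_le.2 h1]
  · simp [h1, h2, not_lt.1 h1]
  · simp [h1, h2, not_lt.1 h1, not_lt.2 ((not_lt.1 h1).trans (not_lt.1 h2))]

theorem diag (H : EMHyp μ S φ ψ P f g) (r : Fin M) :
    Integrable (fun z => emK φ ψ P (r, z) (r, z)) μ ∧ ∫ z, emK φ ψ P (r, z) (r, z) ∂μ = N := by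
  have hi : ∀ ℓ, Integrable (fun z => φ r ℓ z * ψ r ℓ z) μ := by
    intro ℓ
    simp_rw [mul_comm (φ r ℓ _)]
    exact H.int_mul r _ _ (H.ψ_meas r ℓ) (H.φ_meas r ℓ) 1 1 (fun z hz => by simpa using H.ψ_le r ℓ z hz)
      (fun z hz => by simpa using H.φ_le r ℓ z hz)
  simp only [emK, lt_irrefl, if_false, sub_zero]
  refine ⟨integrable_finsetSum _ fun ℓ _ => hi ℓ, ?_⟩
  rw [integral_finsetSum _ fun ℓ _ => hi ℓ]
  simp_rw [mul_comm (φ r _ _), H.h1]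
  simp

theorem step (H : EMHyp μ S φ ψ P f g) {α : Type*} [Fintype α] [DecidableEq α] (pt : α → Fin M × ℝ)
    (hpt : ∀ i, (pt i).2 ∈ S) (r : Fin M) :
    ∫ w, (emMat φ ψ P (Sum.elim pt (fun _ : Unit => (r, w)))).det ∂μ =
      ((N : ℝ) - emCnt (fun i => (pt i).1) r) * (emMat φ ψ P pt).det := by
  set A := emMat φ ψ P pt with hA
  have hdet : ∀ w, (emMat φ ψ P (Sum.elim pt (fun _ : Unit => (r, w)))).det
      = A.det * emK φ ψ P (r, w) (r, w)
        - ∑ i, ∑ j, A.adjugate j i * (emK φ ψ P (pt i) (r, w) * emK φ ψ P (r, w) (pt j)) := by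
    intro w
    have : emMat φ ψ P (Sum.elim pt (fun _ : Unit => (r, w)))
        = Matrix.fromBlocks A (Matrix.of fun i _ => emK φ ψ P (pt i) (r, w))
          (Matrix.of fun _ j => emK φ ψ P (r, w) (pt j)) (Matrix.of fun _ _ => emK φ ψ P (r, w) (r, w)) := by
      ext i j
      rcases i with i | i <;> rcases j with j | j <;> rfl
    rw [this, em_det_border]
    simp only [Matrix.mul_apply, Matrix.of_apply, Finset.sum_mul]
    congr 1
    refine Finset.sum_congr rfl fun i _ => Finset.sum_congr rfl fun j _ => by ring
  simp_rw [hdet]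
  have hc := fun i j => H.comp (pt i) (pt j) (hpt i) (hpt j) r
  have hci : ∀ i j, Integrable (fun w => A.adjugate j i * (emK φ ψ P (pt i) (r, w) * emK φ ψ P (r, w) (pt j))) μ :=
    fun i j => (hc i j).1.const_mul _
  rw [integral_sub ((H.diag r).1.const_mul _) (integrable_finsetSum _ fun i _ => integrable_finsetSum _ fun j _ => hci i j),
    integral_const_mul, (H.diag r).2, integral_finsetSum _ (fun i _ => integrable_finsetSum _ fun j _ => hci i j)]
  simp_rw [integral_finsetSum _ (fun j _ => hci _ j), integral_const_mul, (hc _ _).2]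
  have hAe : ∀ i j, emK φ ψ P (pt i) (pt j) = A i j := fun _ _ => rfl
  simp_rw [hAe]
  have k1 : ∀ i, ∑ j, A i j * A.adjugate j i = A.det := by
    intro i
    have := congrFun (congrFun (Matrix.mul_adjugate A) i) i
    simpa [Matrix.mul_apply] using this
  have k2 : ∀ j, ∑ i, A.adjugate j i * A i j = A.det := by
    intro j
    have := congrFun (congrFun (Matrix.adjugate_mul A) j) j
    simpa [Matrix.mul_apply] using this
  have e1 : ∑ i, ∑ j, A.adjugate j i * (((if (pt i).1 ≤ r then (1:ℝ) else 0) - (if (pt j).1 < r then 1 else 0)) * A i j)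
      = (∑ i, (if (pt i).1 ≤ r then (1:ℝ) else 0) * A.det) - ∑ j, (if (pt j).1 < r then (1:ℝ) else 0) * A.det := by
    have t1 : ∑ i, (if (pt i).1 ≤ r then (1:ℝ) else 0) * A.det
        = ∑ i, ∑ j, (if (pt i).1 ≤ r then (1:ℝ) else 0) * (A i j * A.adjugate j i) := by
      refine Finset.sum_congr rfl fun i _ => ?_
      rw [← Finset.mul_sum, k1]
    have t2 : ∑ j, (if (pt j).1 < r then (1:ℝ) else 0) * A.det
        = ∑ i, ∑ j, (if (pt j).1 < r then (1:ℝ) else 0) * (A.adjugate j i * A i j) := by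
      rw [Finset.sum_comm]
      refine Finset.sum_congr rfl fun i _ => ?_
      rw [← Finset.mul_sum, k2]
    rw [t1, t2, ← Finset.sum_sub_distrib]
    refine Finset.sum_congr rfl fun i _ => ?_
    rw [← Finset.sum_sub_distrib]
    refine Finset.sum_congr rfl fun j _ => by ring
  rw [e1, ← Finset.sum_sub_distrib]
  have e2 : ∀ i, (if (pt i).1 ≤ r then (1:ℝ) else 0) * A.det - (if (pt i).1 < r then (1:ℝ) else 0) * A.det
      = (if (pt i).1 = r then (1:ℝ) else 0) * A.det := by
    intro i
    rcases lt_trichotomy (pt i).1 r with h | h | h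
    · simp [h, h.le, h.ne]
    · simp [h]
    · simp [not_le.2 h, h.ne', not_lt.2 h.le]
  simp_rw [e2, ← Finset.sum_mul]
  simp only [emCnt]
  push_cast
  ring

theorem K_le (H : EMHyp μ S φ ψ P f g) (p q : Fin M × ℝ) (hp : p.2 ∈ S) (hq : q.2 ∈ S) :
    |emK φ ψ P p q| ≤ (N + 1) * (f p.1 p.2 * g q.1 q.2) := by
  have h0 := mul_nonneg (H.f_nonneg p.1 _ hp) (H.g_nonneg q.1 _ hq)
  rw [add_mul, one_mul]
  refine (abs_sub _ _).trans (add_le_add ?_ ?_)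
  · refine (Finset.abs_sum_le_sum_abs _ _).trans ?_
    calc _ ≤ ∑ ℓ : Fin N, (f p.1 p.2 * g q.1 q.2) := Finset.sum_le_sum fun ℓ _ => by
          rw [abs_mul]
          exact mul_le_mul (H.φ_le _ _ _ hp) (H.ψ_le _ _ _ hq) (abs_nonneg _) (H.f_nonneg _ _ hp)
      _ = _ := by simp
  · split_ifs with h
    · exact H.P_le _ _ h _ hp _ hq
    · simpa using h0

theorem integrable_det [SigmaFinite μ] (H : EMHyp μ S φ ψ P f g) {α β : Type*} [Fintype α] [DecidableEq α]
    [Fintype β] [DecidableEq β]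
    (pt : α → Fin M × ℝ) (hpt : ∀ i, (pt i).2 ∈ S) (σ : β → Fin M) :
    Integrable (fun z : β → ℝ => (emMat φ ψ P (Sum.elim pt (fun b => (σ b, z b)))).det)
      (Measure.pi fun _ => μ) := by
  have hmK : ∀ m n, Measurable (fun z : ℝ × ℝ => emK φ ψ P (m, z.1) (n, z.2)) := by
    intro m n
    unfold emK
    refine Measurable.sub (Finset.measurable_sum _ fun ℓ _ =>
      ((H.φ_meas m ℓ).comp measurable_fst).mul ((H.ψ_meas n ℓ).comp measurable_snd)) ?_
    dsimp only
    split_ifs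
    · exact H.P_meas m n
    · exact measurable_const
  have hpm : ∀ i : α ⊕ β, ∃ (m : Fin M) (c : (β → ℝ) → ℝ), Measurable c ∧
      ∀ z : β → ℝ, Sum.elim pt (fun b => (σ b, z b)) i = (m, c z) := by
    rintro (i | b)
    · exact ⟨(pt i).1, fun _ => (pt i).2, measurable_const, fun z => rfl⟩
    · exact ⟨σ b, fun z => z b, measurable_pi_apply b, fun z => rfl⟩
  have hm : Measurable (fun z : β → ℝ => (emMat φ ψ P (Sum.elim pt (fun b => (σ b, z b)))).det) := by
    simp only [Matrix.det_apply]
    refine Finset.measurable_sum _ fun τ _ => Measurable.const_smul ?_ _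
    refine Finset.measurable_prod _ fun i _ => ?_
    obtain ⟨m, c, hc, h⟩ := hpm (τ i)
    obtain ⟨m', c', hc', h'⟩ := hpm i
    simp only [emMat, Matrix.of_apply, h, h']
    exact (hmK m m').comp (hc.prodMk hc')
  have hbound : Integrable (fun z : β → ℝ =>
      ((Fintype.card (α ⊕ β)).factorial : ℝ) * ((∏ i : α, ((N + 1 : ℝ) * (f (pt i).1 (pt i).2 * g (pt i).1 (pt i).2))) *
        ∏ b : β, ((N + 1 : ℝ) * (f (σ b) (z b) * g (σ b) (z b))))) (Measure.pi fun _ => μ) := by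
    refine Integrable.const_mul (Integrable.const_mul ?_ _) _
    exact Integrable.fintype_prod (f := fun b w => (N + 1 : ℝ) * (f (σ b) w * g (σ b) w))
      (fun b => (H.fg_int (σ b)).const_mul _)
  refine hbound.mono' hm.aestronglyMeasurable ?_
  have hae : ∀ᵐ z : β → ℝ ∂(Measure.pi fun _ => μ), ∀ b, z b ∈ S :=
    ae_all_iff.2 fun b => (Measure.tendsto_eval_ae_ae (μ := fun _ : β => μ) (i := b)).eventually H.hS
  filter_upwards [hae] with z hz
  set q : α ⊕ β → Fin M × ℝ := Sum.elim pt (fun b => (σ b, z b)) with hq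
  have hqS : ∀ i, (q i).2 ∈ S := by
    rintro (i | b)
    · exact hpt i
    · exact hz b
  rw [Real.norm_eq_abs, Matrix.det_apply]
  refine (Finset.abs_sum_le_sum_abs _ _).trans ?_
  have key : ∀ τ : Equiv.Perm (α ⊕ β), |Equiv.Perm.sign τ • ∏ i, emMat φ ψ P q (τ i) i| ≤
      (∏ i : α, ((N + 1 : ℝ) * (f (pt i).1 (pt i).2 * g (pt i).1 (pt i).2))) *
        ∏ b : β, ((N + 1 : ℝ) * (f (σ b) (z b) * g (σ b) (z b))) := by
    intro τ
    have : |Equiv.Perm.sign τ • ∏ i, emMat φ ψ P q (τ i) i| = ∏ i, |emMat φ ψ P q (τ i) i| := by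
      rw [← Finset.abs_prod]
      rcases Int.units_eq_one_or (Equiv.Perm.sign τ) with h | h <;> simp [h]
    rw [this]
    have s1 : ∏ i, |emMat φ ψ P q (τ i) i| ≤
        ∏ i, ((N + 1 : ℝ) * (f (q (τ i)).1 (q (τ i)).2 * g (q i).1 (q i).2)) :=
      Finset.prod_le_prod (fun _ _ => abs_nonneg _) fun i _ => H.K_le _ _ (hqS _) (hqS _)
    refine s1.trans (le_of_eq ?_)
    rw [Finset.prod_mul_distrib, Finset.prod_mul_distrib,
      Equiv.prod_comp τ (fun i => f (q i).1 (q i).2), ← Finset.prod_mul_distrib,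
      ← Finset.prod_mul_distrib, Fintype.prod_sum_type]
    rfl
  refine (Finset.sum_le_sum fun τ _ => key τ).trans (le_of_eq ?_)
  rw [Finset.sum_const, Finset.card_univ, Fintype.card_perm, nsmul_eq_mul]

theorem integral_fin [SigmaFinite μ] (H : EMHyp μ S φ ψ P f g) {α : Type*} [Fintype α] [DecidableEq α]
    (pt : α → Fin M × ℝ) (hpt : ∀ i, (pt i).2 ∈ S) (n : ℕ) (σ : Fin n → Fin M) :
    ∫ z : Fin n → ℝ, (emMat φ ψ P (Sum.elim pt (fun b => (σ b, z b)))).det ∂(Measure.pi fun _ => μ)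
     = (∏ r, ∏ j ∈ Finset.range (emCnt σ r), ((N : ℝ) - emCnt (fun i => (pt i).1) r - j)) *
        (emMat φ ψ P pt).det := by
  induction n with
  | zero =>
    have : ∀ z : Fin 0 → ℝ, (emMat φ ψ P (Sum.elim pt (fun b => (σ b, z b)))).det = (emMat φ ψ P pt).det := by
      intro z
      rw [← Matrix.det_submatrix_equiv_self (Equiv.sumEmpty α (Fin 0)).symm]
      rfl
    simp_rw [this]
    rw [integral_const]
    simp [emCnt, Measure.real]
  | succ n ih =>
    have hIntg := H.integrable_det pt hpt σ
    have mp := (measurePreserving_piFinSuccAbove (fun _ : Fin (n+1) => μ) 0).symm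
    rw [← mp.integral_comp']
    have hIntg2 := (mp.integrable_comp_emb (MeasurableEquiv.measurableEmbedding _)).2 hIntg
    refine (integral_prod_symm _ hIntg2).trans ?_
    simp only [Function.comp_apply]
    have hdet : ∀ (w : ℝ) (z : Fin n → ℝ),
        (emMat φ ψ P (Sum.elim pt (fun b => (σ b, (MeasurableEquiv.piFinSuccAbove (fun _ : Fin (n+1) => ℝ) 0).symm (w, z) b)))).det
        = (emMat φ ψ P (Sum.elim (Sum.elim pt (fun b : Fin n => (σ b.succ, z b))) (fun _ : Unit => (σ 0, w)))).det := by
      intro w z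
      let e : (α ⊕ Fin n) ⊕ Unit ≃ α ⊕ Fin (n+1) :=
        { toFun := Sum.elim (Sum.elim Sum.inl (fun b => Sum.inr b.succ)) (fun _ => Sum.inr 0)
          invFun := Sum.elim (fun i => Sum.inl (Sum.inl i))
            (Fin.cases (Sum.inr ()) (fun b => Sum.inl (Sum.inr b)))
          left_inv := by rintro ((i | b) | u) <;> simp
          right_inv := by
            rintro (i | b)
            · simp
            · refine Fin.cases ?_ (fun b => ?_) b <;> simp }
      rw [← Matrix.det_submatrix_equiv_self e]
      have : ∀ i, (Sum.elim pt (fun b => (σ b, (MeasurableEquiv.piFinSuccAbove (fun _ : Fin (n+1) => ℝ) 0).symm (w, z) b))) (e i)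
          = Sum.elim (Sum.elim pt (fun b : Fin n => (σ b.succ, z b))) (fun _ : Unit => (σ 0, w)) i := by
        rintro ((i | b) | u)
        · rfl
        · rfl
        · rfl
      congr 1
      ext i j
      simp only [Matrix.submatrix_apply, emMat, Matrix.of_apply, this]
    simp_rw [hdet]
    have hae : ∀ᵐ z : Fin n → ℝ ∂(Measure.pi fun _ => μ), ∀ b, z b ∈ S :=
      ae_all_iff.2 fun b => (Measure.tendsto_eval_ae_ae (μ := fun _ : Fin n => μ) (i := b)).eventually H.hS
    have hstep : ∀ᵐ z : Fin n → ℝ ∂(Measure.pi fun _ => μ),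
        ∫ w, (emMat φ ψ P (Sum.elim (Sum.elim pt (fun b : Fin n => (σ b.succ, z b))) (fun _ : Unit => (σ 0, w)))).det ∂μ
        = ((N : ℝ) - emCnt (fun i => (pt i).1) (σ 0) - emCnt (fun b : Fin n => σ b.succ) (σ 0)) *
          (emMat φ ψ P (Sum.elim pt (fun b : Fin n => (σ b.succ, z b)))).det := by
      filter_upwards [hae] with z hz
      rw [H.step _ (by rintro (i | b); exacts [hpt i, hz b]) (σ 0)]
      congr 1
      simp only [emCnt, Fintype.sum_sum_type, Sum.elim_inl, Sum.elim_inr]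
      rw [Nat.cast_add, sub_add_eq_sub_sub]
      rfl
    refine (integral_congr_ae hstep).trans ?_
    rw [integral_const_mul, ih (fun b => σ b.succ), ← mul_assoc]
    congr 1
    have hcnt : ∀ r, ∏ j ∈ Finset.range (emCnt σ r), ((N : ℝ) - emCnt (fun i => (pt i).1) r - j)
        = (∏ j ∈ Finset.range (emCnt (fun b : Fin n => σ b.succ) r), ((N : ℝ) - emCnt (fun i => (pt i).1) r - j))
          * (if σ 0 = r then ((N : ℝ) - emCnt (fun i => (pt i).1) (σ 0) - emCnt (fun b : Fin n => σ b.succ) (σ 0)) else 1) := by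
      intro r
      have : emCnt σ r = emCnt (fun b : Fin n => σ b.succ) r + if σ 0 = r then 1 else 0 := by
        simp only [emCnt, Fin.sum_univ_succ]; ring
      rw [this]
      split_ifs with h
      · subst h
        rw [Finset.prod_range_succ]
      · simp
    simp_rw [hcnt]
    rw [Finset.prod_mul_distrib, Finset.prod_ite_eq]
    simp [mul_comm]

theorem integral_gen [SigmaFinite μ] (H : EMHyp μ S φ ψ P f g) {α β : Type*} [Fintype α] [DecidableEq α]
    [Fintype β] [DecidableEq β]
    (pt : α → Fin M × ℝ) (hpt : ∀ i, (pt i).2 ∈ S) (σ : β → Fin M) :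
    ∫ z : β → ℝ, (emMat φ ψ P (Sum.elim pt (fun b => (σ b, z b)))).det ∂(Measure.pi fun _ => μ)
     = (∏ r, ∏ j ∈ Finset.range (emCnt σ r), ((N : ℝ) - emCnt (fun i => (pt i).1) r - j)) *
        (emMat φ ψ P pt).det := by
  let e : Fin (Fintype.card β) ≃ β := (Fintype.equivFin β).symm
  have mp := measurePreserving_piCongrLeft (fun _ : β => μ) e
  rw [← mp.integral_comp']
  have hcnt : ∀ r, emCnt σ r = emCnt (fun b => σ (e b)) r := fun r =>
    (Equiv.sum_comp e (fun b => if σ b = r then 1 else 0)).symm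
  simp_rw [hcnt]
  rw [← H.integral_fin pt hpt _ (fun b => σ (e b))]
  refine integral_congr_ae (Filter.Eventually.of_forall fun z => ?_)
  dsimp only
  rw [← Matrix.det_submatrix_equiv_self (Equiv.sumCongr (Equiv.refl α) e)]
  congr 1
  have hz : ∀ b, (MeasurableEquiv.piCongrLeft (fun _ : β => ℝ) e) z (e b) = z b := fun b =>
    Equiv.piCongrLeft_apply_apply (P := fun _ => ℝ) e z b
  ext i j
  rcases i with i | i <;> rcases j with j | j <;>
    simp [emMat, hz]

end EMHyp


noncomputable def bG (ν : ℝ) (n : ℕ) : ℝ := Real.Gamma ((n : ℝ) + 1 + ν)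

theorem bG_pos {ν : ℝ} (hν : -1 < ν) (n : ℕ) : 0 < bG ν n := by
  apply Real.Gamma_pos_of_pos
  have : (0:ℝ) ≤ n := Nat.cast_nonneg n
  linarith

theorem bG_succ {ν : ℝ} (hν : -1 < ν) (n : ℕ) : bG ν (n+1) = ((n:ℝ) + 1 + ν) * bG ν n := by
  have : (0:ℝ) ≤ n := Nat.cast_nonneg n
  unfold bG
  rw [← Real.Gamma_add_one (by linarith)]
  congr 1; push_cast; ring

theorem bG_ge {ν : ℝ} (hν : -1 < ν) (n : ℕ) : bG ν 1 * n.factorial ≤ bG ν (n+1) := by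
  induction n with
  | zero => simp
  | succ n ih =>
    rw [bG_succ hν (n+1), Nat.factorial_succ]
    have h0 := bG_pos hν (n+1)
    push_cast
    have : (0:ℝ) ≤ n := Nat.cast_nonneg n
    nlinarith

theorem bE_summable {ν : ℝ} (hν : -1 < ν) {v : ℝ} (hv : 0 ≤ v) :
    Summable (fun n : ℕ => v ^ n / bG ν n) := by
  rw [← summable_nat_add_iff 1]
  refine Summable.of_nonneg_of_le (fun n => by have := bG_pos hν (n+1); positivity) (fun n => ?_)
    ((Real.summable_pow_div_factorial v).mul_left (v / bG ν 1))
  have h1 := bG_pos hν 1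
  calc v ^ (n+1) / bG ν (n+1) ≤ v ^ (n+1) / (bG ν 1 * n.factorial) :=
        div_le_div_of_nonneg_left (by positivity) (by positivity) (bG_ge hν n)
    _ = _ := by rw [pow_succ]; field_simp

theorem bE_le {ν : ℝ} (hν : -1 < ν) : ∃ C : ℝ, 0 < C ∧ ∀ v : ℝ, 0 ≤ v →
    ∑' n : ℕ, v ^ n / bG ν n ≤ C * ((1 + v) * Real.exp v) := by
  have h0 := bG_pos hν 0
  have h1 := bG_pos hν 1
  refine ⟨1 / bG ν 0 + 1 / bG ν 1, by positivity, fun v hv => ?_⟩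
  rw [(bE_summable hν hv).tsum_eq_zero_add]
  have hs := (summable_nat_add_iff 1).2 (bE_summable hν hv)
  have : ∑' n : ℕ, v ^ (n+1) / bG ν (n+1) ≤ ∑' n : ℕ, v / bG ν 1 * (v ^ n / n.factorial) := by
    refine hs.tsum_le_tsum (fun n => ?_) ((Real.summable_pow_div_factorial v).mul_left (v / bG ν 1))
    calc v ^ (n+1) / bG ν (n+1) ≤ v ^ (n+1) / (bG ν 1 * n.factorial) :=
          div_le_div_of_nonneg_left (by positivity) (by positivity) (bG_ge hν n)
      _ = _ := by rw [pow_succ]; field_simp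
  have hE : ∑' n : ℕ, v ^ n / (n.factorial : ℝ) = Real.exp v := by
    rw [Real.exp_eq_exp_ℝ, NormedSpace.exp_eq_tsum_div]
  rw [tsum_mul_left, hE] at this
  have e1 : 1 ≤ Real.exp v := Real.one_le_exp hv
  rw [pow_zero]
  have a1 : 1 / bG ν 0 ≤ 1 / bG ν 0 * ((1 + v) * Real.exp v) :=
    le_mul_of_one_le_right (by positivity) (by nlinarith)
  have a2 : v / bG ν 1 * Real.exp v ≤ 1 / bG ν 1 * ((1 + v) * Real.exp v) := by
    rw [div_mul_eq_mul_div, one_div_mul_eq_div]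
    gcongr
    linarith
  rw [add_mul]
  linarith

noncomputable def bF (ν w : ℝ) : ℝ := ∑' n : ℕ, w ^ n / (n.factorial * bG ν n)

theorem bF_summable_norm {ν : ℝ} (hν : -1 < ν) (w : ℝ) :
    Summable (fun n : ℕ => ‖w ^ n / (n.factorial * bG ν n)‖) := by
  refine Summable.of_nonneg_of_le (fun n => norm_nonneg _) (fun n => ?_) (bE_summable hν (abs_nonneg w))
  have h1 := bG_pos hν n
  have h2 : (1:ℝ) ≤ n.factorial := by exact_mod_cast Nat.one_le_iff_ne_zero.2 (Nat.factorial_ne_zero n)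
  rw [norm_div, norm_mul, norm_pow, Real.norm_eq_abs, Real.norm_eq_abs, Real.norm_eq_abs,
    abs_of_pos h1, abs_of_pos (by positivity : (0:ℝ) < n.factorial)]
  apply div_le_div_of_nonneg_left (by positivity) h1
  nlinarith

theorem bF_hasSum {ν : ℝ} (hν : -1 < ν) (w : ℝ) :
    HasSum (fun n : ℕ => w ^ n / (n.factorial * bG ν n)) (bF ν w) :=
  (bF_summable_norm hν w).of_norm.hasSum

theorem bF_measurable {ν : ℝ} (hν : -1 < ν) : Measurable (bF ν) := by
  refine measurable_of_tendsto_metrizable (f := fun (k : ℕ) w => ∑ n ∈ Finset.range k, w ^ n / (n.factorial * bG ν n))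
    (fun k => ?_) ?_
  · exact Finset.measurable_sum _ fun n _ => (measurable_id.pow_const n).div_const _
  · rw [tendsto_pi_nhds]
    exact fun w => (bF_hasSum hν w).tendsto_sum_nat

theorem bF_nonneg {ν : ℝ} (hν : -1 < ν) {w : ℝ} (hw : 0 ≤ w) : 0 ≤ bF ν w :=
  tsum_nonneg fun n => by have := bG_pos hν n; positivity

theorem bF_le {ν : ℝ} (hν : -1 < ν) : ∃ C : ℝ, 0 < C ∧ ∀ u v : ℝ, 0 ≤ u → 0 ≤ v →
    bF ν (u * v) ≤ C * (Real.exp u * ((1 + v) * Real.exp v)) := by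
  obtain ⟨C, hC, h⟩ := bE_le hν
  refine ⟨C, hC, fun u v hu hv => ?_⟩
  have : bF ν (u * v) ≤ ∑' n : ℕ, Real.exp u * (v ^ n / bG ν n) := by
    refine (bF_hasSum hν _).summable.tsum_le_tsum (fun n => ?_) ((bE_summable hν hv).mul_left _)
    have h1 := bG_pos hν n
    calc (u * v) ^ n / (n.factorial * bG ν n) = (u ^ n / n.factorial) * (v ^ n / bG ν n) := by
          rw [mul_pow]; field_simp
      _ ≤ _ := mul_le_mul_of_nonneg_right (Real.pow_div_factorial_le_exp u hu n) (by positivity)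
  rw [tsum_mul_left] at this
  calc _ ≤ _ := this
    _ ≤ Real.exp u * (C * ((1 + v) * Real.exp v)) := mul_le_mul_of_nonneg_left (h v hv) (Real.exp_nonneg _)
    _ = _ := by ring

noncomputable def bA (ν : ℝ) (n j : ℕ) : ℝ := (n.choose j : ℝ) * bG ν n / bG ν j

theorem bA_succ_zero {ν : ℝ} (hν : -1 < ν) (n : ℕ) : bA ν (n+1) 0 = ((n:ℝ) + 1 + ν) * bA ν n 0 := by
  unfold bA
  rw [bG_succ hν n]; simp; ring

theorem bA_succ_succ {ν : ℝ} (hν : -1 < ν) (n j : ℕ) :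
    bA ν (n+1) (j+1) = bA ν n j + ((j:ℝ) + n + 2 + ν) * bA ν n (j+1) := by
  unfold bA
  have h1 := bG_pos hν j
  have h3 : (0:ℝ) ≤ j := Nat.cast_nonneg j
  have h4 : (0:ℝ) < (j:ℝ) + 1 + ν := by linarith
  rw [bG_succ hν n, bG_succ hν j, Nat.choose_succ_succ']
  have h5 : ((n.choose (j+1) : ℝ)) * (j + 1) = n.choose j * (n - j) := by
    rcases le_or_gt j n with h | h
    · have := Nat.choose_succ_right_eq n j
      have h6 : ((n - j : ℕ) : ℝ) = n - j := Nat.cast_sub h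
      rw [← h6]
      exact_mod_cast this
    · rw [Nat.choose_eq_zero_of_lt h, Nat.choose_eq_zero_of_lt (by omega)]; simp
  field_simp
  push_cast
  linear_combination (-(bG ν n)) * h5

theorem bG_vandermonde {ν : ℝ} (hν : -1 < ν) (n k : ℕ) :
    bG ν (k + n) / bG ν k = ∑ j ∈ Finset.range (n+1), bA ν n j * (k.descFactorial j : ℝ) := by
  have hk := bG_pos hν k
  induction n with
  | zero => simp [bA, hk.ne', (bG_pos hν 0).ne']
  | succ n ih =>
    rw [← add_assoc, bG_succ hν, mul_div_assoc, ih]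
    have key : ∀ j : ℕ, ((k:ℝ) + n + 1 + ν) * (k.descFactorial j : ℝ) =
        (k.descFactorial (j+1) : ℝ) + ((j:ℝ) + n + 1 + ν) * k.descFactorial j := by
      intro j
      rw [Nat.descFactorial_succ]
      rcases le_or_gt j k with h | h
      · push_cast [Nat.cast_sub h]; ring
      · rw [Nat.descFactorial_of_lt h]; simp
    have hz : bA ν n (n+1) = 0 := by simp [bA]
    have s1 : ∑ j ∈ Finset.range (n+1), bA ν n j * (k.descFactorial j : ℝ) =
        ∑ j ∈ Finset.range (n+2), bA ν n j * (k.descFactorial j : ℝ) := by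
      rw [Finset.sum_range_succ _ (n+1), hz]; simp
    have e1 : ((↑(k + n) : ℝ) + 1 + ν) * ∑ j ∈ Finset.range (n+1), bA ν n j * (k.descFactorial j : ℝ)
        = ∑ j ∈ Finset.range (n+1), bA ν n j * (k.descFactorial (j+1) : ℝ) +
          ∑ j ∈ Finset.range (n+1), ((j:ℝ) + n + 1 + ν) * bA ν n j * k.descFactorial j := by
      rw [Finset.mul_sum, ← Finset.sum_add_distrib]
      refine Finset.sum_congr rfl fun j _ => ?_
      have := key j
      push_cast
      linear_combination bA ν n j * this
    have e2 : ∑ j ∈ Finset.range (n+1), ((j:ℝ) + n + 1 + ν) * bA ν n j * k.descFactorial j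
        = ∑ j ∈ Finset.range (n+2), ((j:ℝ) + n + 1 + ν) * bA ν n j * k.descFactorial j := by
      rw [Finset.sum_range_succ _ (n+1), hz]; simp
    have e3 : ∑ j ∈ Finset.range (n+1), bA ν (n+1) (j+1) * (k.descFactorial (j+1) : ℝ)
        = ∑ j ∈ Finset.range (n+1), bA ν n j * (k.descFactorial (j+1) : ℝ) +
          ∑ j ∈ Finset.range (n+1), ((j:ℝ) + n + 2 + ν) * bA ν n (j+1) * k.descFactorial (j+1) := by
      rw [← Finset.sum_add_distrib]
      refine Finset.sum_congr rfl fun j _ => ?_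
      rw [bA_succ_succ hν]; ring
    rw [e1, e2, Finset.sum_range_succ' _ (n+1), Finset.sum_range_succ' _ (n+1), e3, bA_succ_zero hν]
    have e4 : ∑ j ∈ Finset.range (n+1), (((j + 1 : ℕ):ℝ) + n + 1 + ν) * bA ν n (j+1) * k.descFactorial (j+1)
        = ∑ j ∈ Finset.range (n+1), ((j:ℝ) + n + 2 + ν) * bA ν n (j+1) * k.descFactorial (j+1) := by
      refine Finset.sum_congr rfl fun j _ => ?_
      push_cast; ring
    rw [e4]
    push_cast; ring

noncomputable def bLg (ν : ℝ) (n : ℕ) (α : ℝ) : ℝ := ∑ j ∈ Finset.range (n+1), bA ν n j * α ^ j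

theorem em_hasSum_cong {f g : ℕ → ℝ} {a b : ℝ} (h : HasSum f a) (hf : ∀ n, g n = f n) (hb : b = a) :
    HasSum g b := by
  rw [hb, (funext hf : g = f)]; exact h

theorem bS_hasSum {ν : ℝ} (hν : -1 < ν) (n : ℕ) (α : ℝ) :
    HasSum (fun k : ℕ => α ^ k * bG ν (k + n) / (k.factorial * bG ν k)) (bLg ν n α * Real.exp α) := by
  have hd : ∀ j : ℕ, HasSum (fun k : ℕ => α ^ k / k.factorial * (k.descFactorial j : ℝ)) (α ^ j * Real.exp α) := by
    intro j
    rw [← hasSum_nat_add_iff' j]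
    have : ∑ i ∈ Finset.range j, α ^ i / i.factorial * (i.descFactorial j : ℝ) = 0 := by
      refine Finset.sum_eq_zero fun i hi => ?_
      rw [Nat.descFactorial_of_lt (Finset.mem_range.1 hi)]; simp
    rw [this, sub_zero]
    have he : HasSum (fun k : ℕ => α ^ k / (k.factorial : ℝ)) (Real.exp α) := by
      rw [Real.exp_eq_exp_ℝ]; exact NormedSpace.expSeries_div_hasSum_exp α
    refine em_hasSum_cong (he.mul_left (α ^ j)) (fun k => ?_) rfl
    have h := Nat.factorial_mul_descFactorial (Nat.le_add_left j k)
    rw [Nat.add_sub_cancel] at h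
    have h' : (k.factorial : ℝ) * ((k+j).descFactorial j : ℝ) = ((k+j).factorial : ℝ) := by exact_mod_cast h
    have h1 : (0:ℝ) < k.factorial := by positivity
    have h2 : (0:ℝ) < (k+j).factorial := by positivity
    field_simp
    rw [pow_add]
    linear_combination α ^ k * α ^ j * h'
  have := hasSum_sum (s := Finset.range (n+1)) (fun j _ => (hd j).mul_left (bA ν n j))
  refine em_hasSum_cong this (fun k => ?_) ?_
  · have hk := bG_pos hν k
    have h1 : (0:ℝ) < k.factorial := by positivity
    have : α ^ k * bG ν (k + n) / (k.factorial * bG ν k) = α ^ k / k.factorial * (bG ν (k+n) / bG ν k) := by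
      field_simp
    rw [this, bG_vandermonde hν, Finset.mul_sum]
    refine Finset.sum_congr rfl fun j _ => ?_
    ring
  · rw [bLg, Finset.sum_mul]
    refine Finset.sum_congr rfl fun j _ => ?_
    ring


theorem bMom_pow {ν : ℝ} (hν : -1 < ν) {c : ℝ} (hc : 0 < c) (n : ℕ) :
    IntegrableOn (fun z : ℝ => z ^ ν * z ^ n * Real.exp (-(c * z))) (Set.Ioi 0) ∧
    ∫ z in Set.Ioi (0:ℝ), z ^ ν * z ^ n * Real.exp (-(c * z)) =
      (1 / c) ^ (ν + 1) * (1 / c) ^ n * bG ν n := by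
  have hn : (0:ℝ) ≤ n := Nat.cast_nonneg n
  have e : ∀ z ∈ Set.Ioi (0:ℝ), z ^ (ν + n) * Real.exp (-(c * z)) = z ^ ν * z ^ n * Real.exp (-(c * z)) := by
    intro z hz
    rw [Real.rpow_add hz, Real.rpow_natCast]
  constructor
  · have := integrableOn_rpow_mul_exp_neg_mul_rpow (p := 1) (s := ν + n) (b := c) (by linarith) one_pos hc
    refine this.congr_fun (fun z hz => ?_) measurableSet_Ioi
    rw [← e z hz]
    simp only [Real.rpow_one, neg_mul]
  · rw [← setIntegral_congr_fun measurableSet_Ioi e]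
    have := Real.integral_rpow_mul_exp_neg_mul_Ioi (a := ν + n + 1) (r := c) (by linarith) hc
    simp only [add_sub_cancel_right] at this
    rw [this, bG]
    have h1 : ν + n + 1 = (ν + 1) + n := by ring
    have h2 : (n:ℝ) + 1 + ν = (ν + 1) + n := by ring
    rw [h1, h2, Real.rpow_add (by positivity), Real.rpow_natCast]

theorem bLg_pos {ν : ℝ} (hν : -1 < ν) (n : ℕ) {α : ℝ} (hα : 0 ≤ α) : 0 < bLg ν n α := by
  unfold bLg
  rw [Finset.sum_range_succ']
  have : 0 < bA ν n 0 := by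
    have := bG_pos hν 0
    have := bG_pos hν n
    simp [bA]; positivity
  have h2 : 0 ≤ ∑ j ∈ Finset.range n, bA ν n (j+1) * α ^ (j+1) := by
    refine Finset.sum_nonneg fun j _ => ?_
    have := bG_pos hν (j+1)
    have := bG_pos hν n
    unfold bA; positivity
  rw [pow_zero, mul_one]
  linarith

theorem bMom_integral {ν : ℝ} (hν : -1 < ν) {c : ℝ} (hc : 0 < c) (n : ℕ) (α : ℝ) :
    ∫ z in Set.Ioi (0:ℝ), z ^ ν * z ^ n * Real.exp (-(c * z)) * bF ν (α * z) =
      (1 / c) ^ (ν + 1) * (1 / c) ^ n * (bLg ν n (α / c) * Real.exp (α / c)) := by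
  set F : ℕ → ℝ → ℝ := fun k z => z ^ ν * z ^ n * Real.exp (-(c * z)) * ((α * z) ^ k / (k.factorial * bG ν k))
  have hF : ∀ k z, F k z = α ^ k / (k.factorial * bG ν k) * (z ^ ν * z ^ (k + n) * Real.exp (-(c * z))) := by
    intro k z
    simp only [F]
    rw [mul_pow, pow_add]; ring
  have hFn : ∀ k, ∀ z ∈ Set.Ioi (0:ℝ), ‖F k z‖ = |α| ^ k / (k.factorial * bG ν k) * (z ^ ν * z ^ (k + n) * Real.exp (-(c * z))) := by
    intro k z hz
    have hz : 0 < z := hz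
    have := bG_pos hν k
    have h1 : 0 < z ^ ν * z ^ (k + n) * Real.exp (-(c * z)) := by
      have := Real.rpow_pos_of_pos hz ν
      positivity
    rw [hF, norm_mul, Real.norm_of_nonneg h1.le, norm_div, norm_pow, Real.norm_eq_abs α,
      Real.norm_of_nonneg (by positivity : (0:ℝ) ≤ (k.factorial * bG ν k))]
  have hi : ∀ k, ∫ z in Set.Ioi (0:ℝ), F k z = (1 / c) ^ (ν + 1) * (1 / c) ^ n * ((α / c) ^ k * bG ν (k + n) / (k.factorial * bG ν k)) := by
    intro k
    simp_rw [hF]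
    rw [integral_const_mul, (bMom_pow hν hc (k + n)).2, pow_add, div_pow α c]
    ring
  have hin : ∀ k, ∫ z in Set.Ioi (0:ℝ), ‖F k z‖ = (1 / c) ^ (ν + 1) * (1 / c) ^ n * ((|α| / c) ^ k * bG ν (k + n) / (k.factorial * bG ν k)) := by
    intro k
    rw [setIntegral_congr_fun measurableSet_Ioi (hFn k)]
    rw [integral_const_mul, (bMom_pow hν hc (k + n)).2, pow_add, div_pow |α| c]
    ring
  have h := hasSum_integral_of_summable_integral_norm (F := F) (μ := volume.restrict (Set.Ioi 0))
    (fun k => by simp_rw [funext (hF k)]; exact (bMom_pow hν hc (k + n)).1.const_mul _)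
    (by simp_rw [hin]; exact (bS_hasSum hν n (|α| / c)).summable.mul_left _)
  simp_rw [hi] at h
  rw [((bS_hasSum hν n (α / c)).mul_left _).unique h]
  refine integral_congr_ae (Filter.Eventually.of_forall fun z => ?_)
  simp only [F]
  rw [tsum_mul_left]
  rfl

theorem bF_abs_le {ν : ℝ} (hν : -1 < ν) (w : ℝ) : |bF ν w| ≤ bF ν |w| := by
  have := norm_tsum_le_tsum_norm (bF_summable_norm hν w)
  refine this.trans (le_of_eq ?_)
  unfold bF
  refine tsum_congr fun n => ?_
  have := bG_pos hν n
  rw [norm_div, norm_pow, Real.norm_eq_abs w,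
      Real.norm_of_nonneg (by positivity : (0:ℝ) ≤ (n.factorial * bG ν n))]

theorem bMom_integrable {ν : ℝ} (hν : -1 < ν) {c : ℝ} (hc : 0 < c) (n : ℕ) (α : ℝ) :
    IntegrableOn (fun z : ℝ => z ^ ν * z ^ n * Real.exp (-(c * z)) * bF ν (α * z)) (Set.Ioi 0) := by
  have h : Integrable (fun z : ℝ => z ^ ν * z ^ n * Real.exp (-(c * z)) * bF ν (|α| * z)) (volume.restrict (Set.Ioi 0)) := by
    by_contra hcon
    have h1 := bMom_integral hν hc n |α|
    rw [integral_undef hcon] at h1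
    have h2 := bLg_pos hν n (α := |α| / c) (by positivity)
    have h3 := Real.rpow_pos_of_pos (by positivity : 0 < 1 / c) (ν + 1)
    have : 0 < (1 / c) ^ (ν + 1) * (1 / c) ^ n * (bLg ν n (|α| / c) * Real.exp (|α| / c)) := by positivity
    linarith
  refine h.mono' ?_ ?_
  · have := bF_measurable hν
    fun_prop
  · filter_upwards [ae_restrict_mem measurableSet_Ioi] with z hz
    have hz : 0 < z := hz
    have h3 := Real.rpow_pos_of_pos hz ν
    rw [norm_mul, Real.norm_of_nonneg (by positivity : 0 ≤ z ^ ν * z ^ n * Real.exp (-(c * z)))]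
    refine mul_le_mul_of_nonneg_left ?_ (by positivity)
    have := bF_abs_le hν (α * z)
    rwa [abs_mul, abs_of_pos hz] at this

theorem bCK_integral {ν : ℝ} (hν : -1 < ν) {c : ℝ} (hc : 0 < c) {α β : ℝ} (hα : 0 ≤ α) (hβ : 0 ≤ β) :
    ∫ z in Set.Ioi (0:ℝ), z ^ ν * Real.exp (-(c * z)) * bF ν (α * z) * bF ν (β * z) =
      (1 / c) ^ (ν + 1) * (Real.exp (α / c) * Real.exp (β / c) * bF ν ((α / c) * (β / c))) := by
  set F : ℕ → ℝ → ℝ := fun n z => z ^ ν * Real.exp (-(c * z)) * bF ν (α * z) * ((β * z) ^ n / (n.factorial * bG ν n))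
  have hF : ∀ n z, F n z = β ^ n / (n.factorial * bG ν n) * (z ^ ν * z ^ n * Real.exp (-(c * z)) * bF ν (α * z)) := by
    intro k z
    simp only [F]
    rw [mul_pow]; ring
  have hFn : ∀ n, ∀ z ∈ Set.Ioi (0:ℝ), ‖F n z‖ = F n z := by
    intro n z hz
    have hz : 0 < z := hz
    have := bG_pos hν n
    have h3 := Real.rpow_pos_of_pos hz ν
    have := bF_nonneg hν (mul_nonneg hα hz.le)
    refine Real.norm_of_nonneg ?_
    simp only [F]
    positivity
  have hi : ∀ n, ∫ z in Set.Ioi (0:ℝ), F n z = (1 / c) ^ (ν + 1) * Real.exp (α / c) *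
      ∑ j ∈ Finset.range (n+1), ((α / c * (β / c)) ^ j / (j.factorial * bG ν j)) * ((β / c) ^ (n - j) / (n - j).factorial) := by
    intro n
    simp_rw [hF]
    rw [integral_const_mul, bMom_integral hν hc n, bLg]
    have : ∑ j ∈ Finset.range (n+1), ((α / c * (β / c)) ^ j / (j.factorial * bG ν j)) * ((β / c) ^ (n - j) / (n - j).factorial)
       = β ^ n / (n.factorial * bG ν n) * (1 / c) ^ n * ∑ j ∈ Finset.range (n+1), bA ν n j * (α / c) ^ j := by
      rw [Finset.mul_sum]
      refine Finset.sum_congr rfl fun j hj => ?_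
      have hj : j ≤ n := Nat.lt_succ_iff.1 (Finset.mem_range.1 hj)
      have g1 := bG_pos hν n
      have g2 := bG_pos hν j
      unfold bA
      rw [Nat.cast_choose ℝ hj, mul_pow]
      have : β ^ n * (1 / c) ^ n = (β / c) ^ j * (β / c) ^ (n - j) := by
        rw [← pow_add, Nat.add_sub_cancel' hj, ← mul_pow]; congr 1; ring
      have h1 : (0:ℝ) < n.factorial := by positivity
      have h2 : (0:ℝ) < j.factorial := by positivity
      have h3 : (0:ℝ) < (n - j).factorial := by positivity
      calc _ = ((β / c) ^ j * (β / c) ^ (n - j)) * (α / c) ^ j / (j.factorial * bG ν j * (n - j).factorial) := by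
            field_simp
        _ = _ := by rw [← this]; field_simp
    rw [this]
    ring
  have he : HasSum (fun k : ℕ => (β / c) ^ k / (k.factorial : ℝ)) (Real.exp (β / c)) := by
      rw [Real.exp_eq_exp_ℝ]; exact NormedSpace.expSeries_div_hasSum_exp _
  have hen : Summable (fun k : ℕ => ‖(β / c) ^ k / (k.factorial : ℝ)‖) := he.summable.norm
  have hcp := summable_norm_sum_mul_range_of_summable_norm (bF_summable_norm hν (α / c * (β / c))) hen
  have hcs := tsum_mul_tsum_eq_tsum_sum_range_of_summable_norm (bF_summable_norm hν (α / c * (β / c))) hen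
  rw [he.tsum_eq] at hcs
  have h := integral_tsum_of_summable_integral_norm (F := F) (μ := volume.restrict (Set.Ioi 0))
    (fun n => by simp_rw [funext (hF n)]; exact (bMom_integrable hν hc n α).const_mul _)
    (by
      have : ∀ n, ∫ z in Set.Ioi (0:ℝ), ‖F n z‖ = ∫ z in Set.Ioi (0:ℝ), F n z := fun n =>
        setIntegral_congr_fun measurableSet_Ioi (hFn n)
      simp_rw [this, hi]
      exact hcp.of_norm.mul_left _)
  simp_rw [hi] at h
  rw [tsum_mul_left, ← hcs] at h
  have h2 : ∫ z in Set.Ioi (0:ℝ), ∑' n, F n z = ∫ z in Set.Ioi (0:ℝ), z ^ ν * Real.exp (-(c * z)) * bF ν (α * z) * bF ν (β * z) := by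
    refine integral_congr_ae (Filter.Eventually.of_forall fun z => ?_)
    simp only [F]
    rw [tsum_mul_left]
    rfl
  rw [← h2, ← h, bF]
  ring


noncomputable def bP (ν τ x y : ℝ) : ℝ :=
  (1 / (2 * τ)) ^ (ν + 1) * x ^ ν * Real.exp (-((x + y) / (2 * τ))) * bF ν (x * y / (4 * τ ^ 2))

theorem besselI_eq (ν : ℝ) {z : ℝ} (hz : 0 < z) : besselI ν z = (z / 2) ^ ν * bF ν ((z / 2) ^ 2) := by
  unfold besselI bF
  rw [← tsum_mul_left]
  refine tsum_congr fun n => ?_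
  rw [Real.rpow_add (by positivity), Real.Gamma_nat_eq_factorial, ← pow_mul, bG]
  have : (z / 2) ^ (2 * (n:ℝ)) = (z / 2) ^ (2 * n) := by
    rw [← Real.rpow_natCast]; push_cast; rfl
  rw [this]
  ring

theorem besselJ_eq (ν : ℝ) {z : ℝ} (hz : 0 < z) : besselJ ν z = (z / 2) ^ ν * bF ν (-(z / 2) ^ 2) := by
  unfold besselJ bF
  rw [← tsum_mul_left]
  refine tsum_congr fun n => ?_
  rw [Real.rpow_add (by positivity), Real.Gamma_nat_eq_factorial, neg_pow ((z / 2) ^ 2), ← pow_mul, bG]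
  have : (z / 2) ^ (2 * (n:ℝ)) = (z / 2) ^ (2 * n) := by
    rw [← Real.rpow_natCast]; push_cast; rfl
  rw [this]
  ring

theorem bes_prefactor (ν : ℝ) {τ x y : ℝ} (hτ : 0 < τ) (hx : 0 < x) (hy : 0 < y) :
    (1 / (2 * τ)) * (x / y) ^ (ν / 2) * (Real.sqrt (x * y) / τ / 2) ^ ν = (1 / (2 * τ)) ^ (ν + 1) * x ^ ν := by
  have h1 : (x / y) ^ (ν / 2) = (Real.sqrt (x / y)) ^ ν := by
    rw [Real.sqrt_eq_rpow, ← Real.rpow_mul (by positivity)]; congr 1; ring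
  have h3 : Real.sqrt (x / y) * (Real.sqrt (x * y) / τ / 2) = x * (1 / (2 * τ)) := by
    have : Real.sqrt (x / y) * Real.sqrt (x * y) = x := by
      rw [← Real.sqrt_mul (by positivity), show x / y * (x * y) = x * x by field_simp, Real.sqrt_mul_self hx.le]
    calc _ = (Real.sqrt (x / y) * Real.sqrt (x * y)) / τ / 2 := by ring
      _ = _ := by rw [this]; field_simp
  rw [h1, mul_assoc, ← Real.mul_rpow (by positivity) (by positivity), h3,
    Real.mul_rpow hx.le (by positivity), Real.rpow_add (by positivity), Real.rpow_one]
  ring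

theorem besqP_eq (ν : ℝ) {τ x y : ℝ} (hτ : 0 < τ) (hx : 0 < x) (hy : 0 < y) :
    besqP ν τ x y = bP ν τ x y := by
  unfold besqP bP
  have : 0 < Real.sqrt (x * y) := Real.sqrt_pos.2 (by positivity)
  rw [mul_comm y x, besselI_eq ν (by positivity), ← bes_prefactor ν hτ hx hy]
  have h2 : (Real.sqrt (x * y) / τ / 2) ^ 2 = x * y / (4 * τ ^ 2) := by
    rw [div_pow, div_pow, Real.sq_sqrt (by positivity)]; field_simp; norm_num
  rw [h2, show -(y + x) / (2 * τ) = -((x + y) / (2 * τ)) by ring]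
  ring

theorem besqQ_eq (ν : ℝ) {t v y : ℝ} (ht : 0 < t) (hv : 0 < v) (hy : 0 < y) :
    besqQ ν t v y = (1 / (2 * t)) ^ (ν + 1) * Real.exp (y / (2 * t)) *
      (v ^ ν * Real.exp (-(1 / (2 * t) * v)) * bF ν (-y / (4 * t ^ 2) * v)) := by
  unfold besqQ
  have : 0 < Real.sqrt (v * y) := Real.sqrt_pos.2 (by positivity)
  rw [besselJ_eq ν (by positivity)]
  have h2 : -(Real.sqrt (v * y) / t / 2) ^ 2 = -y / (4 * t ^ 2) * v := by
    rw [div_pow, div_pow, Real.sq_sqrt (by positivity)]; field_simp; norm_num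
  have h3 := bes_prefactor ν ht hv hy
  rw [h2, show (y - v) / (2 * t) = y / (2 * t) + -(1 / (2 * t) * v) by ring, Real.exp_add]
  linear_combination (Real.exp (y / (2 * t)) * Real.exp (-(1 / (2 * t) * v)) * bF ν (-y / (4 * t ^ 2) * v)) * h3

theorem bP_measurable {ν : ℝ} (hν : -1 < ν) (τ : ℝ) : Measurable fun z : ℝ × ℝ => bP ν τ z.1 z.2 := by
  unfold bP
  have := bF_measurable hν
  fun_prop

theorem bP_nonneg {ν : ℝ} (hν : -1 < ν) {τ x y : ℝ} (hτ : 0 < τ) (hx : 0 < x) (hy : 0 < y) : 0 ≤ bP ν τ x y := by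
  unfold bP
  have := bF_nonneg hν (by positivity : 0 ≤ x * y / (4 * τ ^ 2))
  have h3 := Real.rpow_pos_of_pos hx ν
  have h4 := Real.rpow_pos_of_pos (by positivity : 0 < 1 / (2 * τ)) (ν + 1)
  positivity

theorem bP_CK {ν : ℝ} (hν : -1 < ν) {σ τ x y : ℝ} (hσ : 0 < σ) (hτ : 0 < τ) (hx : 0 < x) (hy : 0 < y) :
    ∫ z in Set.Ioi (0:ℝ), bP ν σ x z * bP ν τ z y = bP ν (σ + τ) x y := by
  have hc : 0 < 1 / (2 * σ) + 1 / (2 * τ) := by positivity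
  set c := 1 / (2 * σ) + 1 / (2 * τ) with hcd
  have h := bCK_integral hν hc (α := x / (4 * σ ^ 2)) (β := y / (4 * τ ^ 2)) (by positivity) (by positivity)
  have e : ∀ z, bP ν σ x z * bP ν τ z y = ((1 / (2 * σ)) ^ (ν + 1) * (1 / (2 * τ)) ^ (ν + 1) * x ^ ν *
      (Real.exp (-(x / (2 * σ))) * Real.exp (-(y / (2 * τ))))) * (z ^ ν * Real.exp (-(c * z)) *
        bF ν (x / (4 * σ ^ 2) * z) * bF ν (y / (4 * τ ^ 2) * z)) := by
    intro z
    unfold bP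
    rw [show x * z / (4 * σ ^ 2) = x / (4 * σ ^ 2) * z by ring, show z * y / (4 * τ ^ 2) = y / (4 * τ ^ 2) * z by ring]
    have : Real.exp (-((x + z) / (2 * σ))) * Real.exp (-((z + y) / (2 * τ))) =
      Real.exp (-(x / (2 * σ))) * Real.exp (-(y / (2 * τ))) * Real.exp (-(c * z)) := by
      rw [← Real.exp_add, ← Real.exp_add, ← Real.exp_add]; congr 1; rw [hcd]; ring
    linear_combination ((1 / (2 * σ)) ^ (ν + 1) * (1 / (2 * τ)) ^ (ν + 1) * x ^ ν * z ^ ν *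
        bF ν (x / (4 * σ ^ 2) * z) * bF ν (y / (4 * τ ^ 2) * z)) * this
  simp_rw [e]
  rw [integral_const_mul, h]
  have e1 : (1 / (2 * σ)) ^ (ν + 1) * (1 / (2 * τ)) ^ (ν + 1) * (1 / c) ^ (ν + 1) = (1 / (2 * (σ + τ))) ^ (ν + 1) := by
    rw [← Real.mul_rpow (by positivity) (by positivity), ← Real.mul_rpow (by positivity) (by positivity)]
    congr 1
    rw [hcd]; field_simp; ring
  have e2 : Real.exp (-(x / (2 * σ))) * Real.exp (-(y / (2 * τ))) * (Real.exp (x / (4 * σ ^ 2) / c) * Real.exp (y / (4 * τ ^ 2) / c))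
     = Real.exp (-((x + y) / (2 * (σ + τ)))) := by
    rw [← Real.exp_add, ← Real.exp_add, ← Real.exp_add]
    congr 1
    rw [hcd]; field_simp; ring
  have e3 : x / (4 * σ ^ 2) / c * (y / (4 * τ ^ 2) / c) = x * y / (4 * (σ + τ) ^ 2) := by
    rw [hcd]; field_simp; ring
  unfold bP
  rw [← e1, ← e2, ← e3]
  ring

noncomputable def bU (ν c : ℝ) (n : ℕ) (y : ℝ) : ℝ :=
  ∑ j ∈ Finset.range (n+1), bA ν n j * c ^ (n - j) * y ^ j

theorem bLg_bU (ν : ℝ) (n : ℕ) {c : ℝ} (hc : c ≠ 0) (y : ℝ) : c ^ n * bLg ν n (y / c) = bU ν c n y := by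
  unfold bLg bU
  rw [Finset.mul_sum]
  refine Finset.sum_congr rfl fun j hj => ?_
  have hj : j ≤ n := Nat.lt_succ_iff.1 (Finset.mem_range.1 hj)
  obtain ⟨k, rfl⟩ := Nat.exists_eq_add_of_le hj
  rw [Nat.add_sub_cancel_left, div_pow, pow_add]
  field_simp

theorem bP_mom_eq {ν : ℝ} {τ y : ℝ} (n : ℕ) (z : ℝ) :
    z ^ n * bP ν τ z y = ((1 / (2 * τ)) ^ (ν + 1) * Real.exp (-(y / (2 * τ)))) *
      (z ^ ν * z ^ n * Real.exp (-(1 / (2 * τ) * z)) * bF ν (y / (4 * τ ^ 2) * z)) := by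
  unfold bP
  rw [show z * y / (4 * τ ^ 2) = y / (4 * τ ^ 2) * z by ring,
    show -((z + y) / (2 * τ)) = -(y / (2 * τ)) + -(1 / (2 * τ) * z) by ring, Real.exp_add]
  ring

theorem bP_mom_integrable {ν : ℝ} (hν : -1 < ν) {τ : ℝ} (hτ : 0 < τ) (y : ℝ) (n : ℕ) :
    Integrable (fun z : ℝ => z ^ n * bP ν τ z y) (volume.restrict (Set.Ioi 0)) := by
  simp_rw [bP_mom_eq]
  exact (bMom_integrable hν (by positivity) n _).const_mul _

theorem bP_mom {ν : ℝ} (hν : -1 < ν) {τ : ℝ} (hτ : 0 < τ) (y : ℝ) (n : ℕ) :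
    ∫ z in Set.Ioi (0:ℝ), z ^ n * bP ν τ z y = bU ν (2 * τ) n y := by
  simp_rw [bP_mom_eq]
  rw [integral_const_mul, bMom_integral hν (by positivity), ← bLg_bU ν n (by positivity : 2 * τ ≠ 0),
    show y / (4 * τ ^ 2) / (1 / (2 * τ)) = y / (2 * τ) by field_simp; ring, one_div_one_div]
  have h1 : (1 / (2 * τ)) ^ (ν + 1) * (2 * τ) ^ (ν + 1) = 1 := by
    rw [← Real.mul_rpow (by positivity) (by positivity), one_div_mul_cancel (by positivity), Real.one_rpow]
  have h2 : Real.exp (-(y / (2 * τ))) * Real.exp (y / (2 * τ)) = 1 := by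
    rw [← Real.exp_add]; simp
  linear_combination (Real.exp (-(y / (2 * τ))) * Real.exp (y / (2 * τ))) * (2 * τ) ^ n * bLg ν n (y / (2 * τ)) * h1
    + (2 * τ) ^ n * bLg ν n (y / (2 * τ)) * h2

theorem bQ_mom_eq {ν : ℝ} {t y : ℝ} (ht : 0 < t) (hy : 0 < y) (n : ℕ) : ∀ v ∈ Set.Ioi (0:ℝ),
    (-v) ^ n * besqQ ν t v y = ((-1) ^ n * (1 / (2 * t)) ^ (ν + 1) * Real.exp (y / (2 * t))) *
      (v ^ ν * v ^ n * Real.exp (-(1 / (2 * t) * v)) * bF ν (-y / (4 * t ^ 2) * v)) := by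
  intro v hv
  rw [besqQ_eq ν ht hv hy, neg_pow]
  ring

theorem bQ_mom_integrable {ν : ℝ} (hν : -1 < ν) {t y : ℝ} (ht : 0 < t) (hy : 0 < y) (n : ℕ) :
    Integrable (fun v : ℝ => (-v) ^ n * besqQ ν t v y) (volume.restrict (Set.Ioi 0)) := by
  have : IntegrableOn (fun v : ℝ => (-v) ^ n * besqQ ν t v y) (Set.Ioi 0) := by
    refine IntegrableOn.congr_fun ?_ (fun v hv => (bQ_mom_eq ht hy n v hv).symm) measurableSet_Ioi
    exact (bMom_integrable hν (by positivity) n _).const_mul _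
  exact this

theorem bQ_mom {ν : ℝ} (hν : -1 < ν) {t y : ℝ} (ht : 0 < t) (hy : 0 < y) (n : ℕ) :
    ∫ v in Set.Ioi (0:ℝ), (-v) ^ n * besqQ ν t v y = bU ν (-2 * t) n y := by
  rw [setIntegral_congr_fun measurableSet_Ioi (bQ_mom_eq ht hy n)]
  rw [integral_const_mul, bMom_integral hν (by positivity), ← bLg_bU ν n (by linarith : -2 * t < 0).ne,
    show -y / (4 * t ^ 2) / (1 / (2 * t)) = -(y / (2 * t)) by field_simp; ring, one_div_one_div,
    show y / (-2 * t) = -(y / (2 * t)) by field_simp, show (-2 * t) ^ n = (-1) ^ n * (2 * t) ^ n by rw [← mul_pow]; ring]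
  have h1 : (1 / (2 * t)) ^ (ν + 1) * (2 * t) ^ (ν + 1) = 1 := by
    rw [← Real.mul_rpow (by positivity) (by positivity), one_div_mul_cancel (by positivity), Real.one_rpow]
  have h2 : Real.exp (-(y / (2 * t))) * Real.exp (y / (2 * t)) = 1 := by
    rw [← Real.exp_add]; simp
  linear_combination ((-1) ^ n) * (Real.exp (-(y / (2 * t))) * Real.exp (y / (2 * t))) * (2 * t) ^ n * bLg ν n (-(y / (2 * t))) * h1
    + (-1) ^ n * (2 * t) ^ n * bLg ν n (-(y / (2 * t))) * h2

theorem bA_mul {ν : ℝ} (hν : -1 < ν) {n j i : ℕ} (hi : i ≤ j) :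
    bA ν n j * bA ν j i = bA ν n i * ((n - i).choose (j - i) : ℝ) := by
  unfold bA
  have := bG_pos hν j
  have := bG_pos hν i
  have h : ((n.choose j : ℝ)) * j.choose i = n.choose i * (n - i).choose (j - i) := by
    exact_mod_cast Nat.choose_mul (n := n) hi
  field_simp
  linear_combination bG ν n * h

theorem bU_semigroup {ν : ℝ} (hν : -1 < ν) (c d : ℝ) (n : ℕ) (y : ℝ) :
    ∑ j ∈ Finset.range (n+1), bA ν n j * c ^ (n - j) * bU ν d j y = bU ν (c + d) n y := by
  have h1 : ∀ j ∈ Finset.range (n+1), bA ν n j * c ^ (n - j) * bU ν d j y =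
      ∑ i ∈ Finset.range (n+1), bA ν n j * c ^ (n - j) * (bA ν j i * d ^ (j - i) * y ^ i) := by
    intro j hj
    unfold bU
    rw [Finset.mul_sum]
    refine Finset.sum_subset ?_ ?_
    · intro i hi
      simp only [Finset.mem_range] at *
      omega
    · intro i _ hi
      simp only [Finset.mem_range, not_lt] at hi
      have : bA ν j i = 0 := by
        unfold bA
        rw [Nat.choose_eq_zero_of_lt (by omega)]; simp
      rw [this]; ring
  rw [Finset.sum_congr rfl h1, Finset.sum_comm, bU]
  refine Finset.sum_congr rfl fun i hi => ?_
  have hi : i ≤ n := Nat.lt_succ_iff.1 (Finset.mem_range.1 hi)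
  rw [Finset.range_eq_Ico, ← Finset.sum_Ico_consecutive _ (Nat.zero_le i) (by omega : i ≤ n + 1)]
  have h0 : ∑ j ∈ Finset.Ico 0 i, bA ν n j * c ^ (n - j) * (bA ν j i * d ^ (j - i) * y ^ i) = 0 := by
    refine Finset.sum_eq_zero fun j hj => ?_
    have : bA ν j i = 0 := by
      unfold bA
      rw [Nat.choose_eq_zero_of_lt (Finset.mem_Ico.1 hj).2]; simp
    rw [this]; ring
  rw [h0, zero_add, Finset.sum_Ico_eq_sum_range, add_comm c d, add_pow, Finset.mul_sum, Finset.sum_mul,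
    show n + 1 - i = n - i + 1 by omega]
  refine Finset.sum_congr rfl fun k hk => ?_
  have hk : k ≤ n - i := Nat.lt_succ_iff.1 (Finset.mem_range.1 hk)
  have := bA_mul hν (n := n) (j := i + k) (i := i) (by omega)
  rw [Nat.add_sub_cancel_left] at this
  rw [Nat.add_sub_cancel_left, show n - (i + k) = n - i - k by omega]
  linear_combination c ^ (n - i - k) * d ^ k * y ^ i * this

theorem bU_zero {ν : ℝ} (hν : -1 < ν) (n : ℕ) (y : ℝ) : bU ν 0 n y = y ^ n := by
  unfold bU
  rw [Finset.sum_range_succ, Finset.sum_eq_zero]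
  · simp [bA, (bG_pos hν n).ne']
  · intro j hj
    rw [zero_pow (by have := Finset.mem_range.1 hj; omega)]; ring

theorem bU_int_integrable {ν : ℝ} (hν : -1 < ν) {τ : ℝ} (hτ : 0 < τ) (c : ℝ) (n : ℕ) (y : ℝ) :
    Integrable (fun z : ℝ => bU ν c n z * bP ν τ z y) (volume.restrict (Set.Ioi 0)) := by
  unfold bU
  simp_rw [Finset.sum_mul, mul_assoc]
  refine integrable_finsetSum _ fun j _ => ?_
  exact ((bP_mom_integrable hν hτ y j).const_mul _).const_mul _

theorem bU_int {ν : ℝ} (hν : -1 < ν) {τ : ℝ} (hτ : 0 < τ) (c : ℝ) (n : ℕ) (y : ℝ) :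
    ∫ z in Set.Ioi (0:ℝ), bU ν c n z * bP ν τ z y = bU ν (c + 2 * τ) n y := by
  rw [← bU_semigroup hν]
  have : ∀ z, bU ν c n z * bP ν τ z y = ∑ j ∈ Finset.range (n+1), (bA ν n j * c ^ (n - j)) * (z ^ j * bP ν τ z y) := by
    intro z
    rw [bU, Finset.sum_mul]
    exact Finset.sum_congr rfl fun j _ => by ring
  simp_rw [this]
  rw [integral_finsetSum]
  · refine Finset.sum_congr rfl fun j _ => ?_
    rw [integral_const_mul, bP_mom hν hτ]
  · intro j _
    exact (bP_mom_integrable hν hτ y j).const_mul _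


noncomputable def bLag {N : ℕ} (a : Fin N → ℝ) (ℓ : Fin N) : Polynomial ℝ :=
  ∏ k ∈ Finset.univ.erase ℓ, (Polynomial.C (1 / (a k - a ℓ)) * (Polynomial.C (a k) - Polynomial.X))

theorem bLag_eval {N : ℕ} (a : Fin N → ℝ) (ℓ : Fin N) (x : ℝ) :
    (bLag a ℓ).eval x = ∏ k ∈ Finset.univ.erase ℓ, ((a k - x) / (a k - a ℓ)) := by
  unfold bLag
  rw [Polynomial.eval_prod]
  refine Finset.prod_congr rfl fun k _ => ?_
  simp; ring

theorem bLag_natDegree {N : ℕ} (a : Fin N → ℝ) (ℓ : Fin N) : (bLag a ℓ).natDegree < N := by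
  have h : (bLag a ℓ).natDegree ≤ ∑ k ∈ Finset.univ.erase ℓ, 1 := by
    unfold bLag
    refine (Polynomial.natDegree_prod_le _ _).trans (Finset.sum_le_sum fun k _ => ?_)
    refine (Polynomial.natDegree_C_mul_le _ _).trans ?_
    refine (Polynomial.natDegree_sub_le _ _).trans ?_
    simp
  have := ℓ.isLt
  simp at h
  omega

theorem bLag_eval_sum {N : ℕ} (a : Fin N → ℝ) (ℓ : Fin N) (x : ℝ) :
    ∑ n ∈ Finset.range N, (bLag a ℓ).coeff n * x ^ n = ∏ k ∈ Finset.univ.erase ℓ, ((a k - x) / (a k - a ℓ)) := by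
  rw [← bLag_eval, Polynomial.eval_eq_sum_range' (bLag_natDegree a ℓ)]

noncomputable def bPsi (ν : ℝ) {N : ℕ} (a : Fin N → ℝ) (ℓ : Fin N) (t y : ℝ) : ℝ :=
  ∑ n ∈ Finset.range N, (bLag a ℓ).coeff n * bU ν (-2 * t) n y

theorem bPsi_eq_int {ν : ℝ} (hν : -1 < ν) {N : ℕ} (a : Fin N → ℝ) (ℓ : Fin N) {t y : ℝ} (ht : 0 < t) (hy : 0 < y) :
    ∫ v in Set.Ioi (0 : ℝ), (∏ k ∈ Finset.univ.erase ℓ, ((a k + v) / (a k - a ℓ))) * besqQ ν t v y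
      = bPsi ν a ℓ t y := by
  have : ∀ v, (∏ k ∈ Finset.univ.erase ℓ, ((a k + v) / (a k - a ℓ))) * besqQ ν t v y
      = ∑ n ∈ Finset.range N, (bLag a ℓ).coeff n * ((-v) ^ n * besqQ ν t v y) := by
    intro v
    have := bLag_eval_sum a ℓ (-v)
    simp only [sub_neg_eq_add] at this
    rw [← this, Finset.sum_mul]
    exact Finset.sum_congr rfl fun n _ => by ring
  simp_rw [this]
  rw [integral_finsetSum]
  · refine Finset.sum_congr rfl fun n _ => ?_
    rw [integral_const_mul, bQ_mom hν ht hy]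
  · intro n _
    exact (bQ_mom_integrable hν ht hy n).const_mul _

theorem bPsi_int {ν : ℝ} (hν : -1 < ν) {N : ℕ} (a : Fin N → ℝ) (ℓ : Fin N) (t : ℝ) {τ : ℝ} (hτ : 0 < τ) (y : ℝ) :
    ∫ z in Set.Ioi (0:ℝ), bPsi ν a ℓ t z * bP ν τ z y = bPsi ν a ℓ (t - τ) y := by
  have : ∀ z, bPsi ν a ℓ t z * bP ν τ z y
      = ∑ n ∈ Finset.range N, (bLag a ℓ).coeff n * (bU ν (-2 * t) n z * bP ν τ z y) := by
    intro z
    rw [bPsi, Finset.sum_mul]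
    exact Finset.sum_congr rfl fun n _ => by ring
  simp_rw [this]
  rw [integral_finsetSum]
  · refine Finset.sum_congr rfl fun n _ => ?_
    rw [integral_const_mul, bU_int hν hτ]
    congr 2; ring
  · intro n _
    exact (bU_int_integrable hν hτ _ n y).const_mul _

theorem bLag_delta {N : ℕ} (a : Fin N → ℝ) (ha : Function.Injective a) (ℓ k : Fin N) :
    ∑ n ∈ Finset.range N, (bLag a ℓ).coeff n * (a k) ^ n = if ℓ = k then 1 else 0 := by
  rw [bLag_eval_sum]
  split_ifs with h
  · subst h
    refine Finset.prod_eq_one fun k hk => div_self ?_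
    exact sub_ne_zero.2 fun h => (Finset.mem_erase.1 hk).1 (ha h)
  · refine Finset.prod_eq_zero (Finset.mem_erase.2 ⟨fun h' => h h'.symm, Finset.mem_univ k⟩) ?_
    simp

theorem bPsi_zero {ν : ℝ} (hν : -1 < ν) {N : ℕ} (a : Fin N → ℝ) (ha : Function.Injective a) (ℓ k : Fin N) :
    bPsi ν a ℓ 0 (a k) = if ℓ = k then 1 else 0 := by
  rw [← bLag_delta a ha, bPsi]
  refine Finset.sum_congr rfl fun n _ => ?_
  rw [mul_zero, bU_zero hν]

noncomputable def bUp (ν c : ℝ) (n : ℕ) : Polynomial ℝ :=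
  Polynomial.X ^ n + ∑ j ∈ Finset.range n, Polynomial.C (bA ν n j * c ^ (n - j)) * Polynomial.X ^ j

theorem bUp_eval {ν : ℝ} (hν : -1 < ν) (c : ℝ) (n : ℕ) (y : ℝ) : (bUp ν c n).eval y = bU ν c n y := by
  unfold bUp bU
  rw [Finset.sum_range_succ, Polynomial.eval_add, Polynomial.eval_finsetSum, add_comm]
  congr 1
  · refine Finset.sum_congr rfl fun j _ => ?_
    simp
  · simp [bA, (bG_pos hν n).ne']

theorem bUp_deg (ν c : ℝ) (n : ℕ) :
    (∑ j ∈ Finset.range n, Polynomial.C (bA ν n j * c ^ (n - j)) * Polynomial.X ^ j).degree < (n : WithBot ℕ) := by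
  refine (Polynomial.degree_sum_le _ _).trans_lt ?_
  refine (Finset.sup_lt_iff (WithBot.bot_lt_coe n)).2 ?_
  intro j hj
  refine (Polynomial.degree_C_mul_X_pow_le _ _).trans_lt ?_
  exact WithBot.coe_lt_coe.2 (Finset.mem_range.1 hj)

theorem vdm_eq {N : ℕ} (x : Fin N → ℝ) : vdm x = (Matrix.vandermonde x).det := by
  rw [Matrix.det_vandermonde, vdm]

theorem bU_det {ν : ℝ} (hν : -1 < ν) (c : ℝ) {N : ℕ} (x : Fin N → ℝ) :
    (Matrix.of fun n j : Fin N => bU ν c n (x j)).det = vdm x := by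
  rw [vdm_eq, Matrix.det_eval_matrixOfPolynomials_eq_det_vandermonde x (fun n => bUp ν c n), ← Matrix.det_transpose]
  · congr 1
    ext i j
    simp [bUp_eval hν]
  · intro i
    rw [bUp, add_comm]
    exact Polynomial.natDegree_add_eq_right_of_degree_lt (by rw [Polynomial.degree_X_pow]; exact bUp_deg ν c i) |>.trans (Polynomial.natDegree_X_pow _)
  · intro i
    exact Polynomial.monic_X_pow_add (bUp_deg ν c i)

theorem bPsi_det {ν : ℝ} (hν : -1 < ν) {N : ℕ} (a : Fin N → ℝ) (ha : Function.Injective a) (t : ℝ) (x : Fin N → ℝ) :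
    (Matrix.of fun ℓ j : Fin N => bPsi ν a ℓ t (x j)).det * vdm a = vdm x := by
  have key : ∀ (t : ℝ) (x : Fin N → ℝ), (Matrix.of fun ℓ j : Fin N => bPsi ν a ℓ t (x j)).det =
      (Matrix.of fun ℓ n : Fin N => (bLag a ℓ).coeff n).det * vdm x := by
    intro t x
    rw [← bU_det hν (-2 * t) x, ← Matrix.det_mul]
    congr 1
    ext i j
    simp [Matrix.mul_apply, bPsi, Finset.sum_range]
  have h1 : (Matrix.of fun ℓ j : Fin N => bPsi ν a ℓ 0 (a j)) = 1 := by
    ext i j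
    simp [bPsi_zero hν a ha, Matrix.one_apply]
  have h2 := key 0 a
  rw [h1, Matrix.det_one] at h2
  rw [key]
  linear_combination (-vdm x) * h2

theorem expB_pow {d : ℝ} (hd : 0 < d) (j : ℕ) : ∃ C : ℝ, 0 < C ∧ ∀ y : ℝ, 0 < y → |y ^ j| ≤ C * Real.exp (d * y) := by
  refine ⟨j.factorial / d ^ j, by positivity, fun y hy => ?_⟩
  have := Real.pow_div_factorial_le_exp (d * y) (by positivity) j
  rw [abs_of_pos (by positivity)]
  calc y ^ j = j.factorial / d ^ j * ((d * y) ^ j / j.factorial) := by rw [mul_pow]; field_simp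
    _ ≤ _ := mul_le_mul_of_nonneg_left this (by positivity)

theorem expB_sum {d : ℝ} (n : ℕ) (c : ℕ → ℝ) (f : ℕ → ℝ → ℝ)
    (hf : ∀ j, ∃ C : ℝ, 0 < C ∧ ∀ y : ℝ, 0 < y → |f j y| ≤ C * Real.exp (d * y)) :
    ∃ C : ℝ, 0 < C ∧ ∀ y : ℝ, 0 < y → |∑ j ∈ Finset.range n, c j * f j y| ≤ C * Real.exp (d * y) := by
  choose C hC hCf using hf
  refine ⟨1 + ∑ j ∈ Finset.range n, |c j| * C j, ?_, fun y hy => ?_⟩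
  · have : 0 ≤ ∑ j ∈ Finset.range n, |c j| * C j :=
      Finset.sum_nonneg fun j _ => mul_nonneg (abs_nonneg _) (hC j).le
    linarith
  · refine (Finset.abs_sum_le_sum_abs _ _).trans ?_
    have : ∑ j ∈ Finset.range n, |c j * f j y| ≤ (∑ j ∈ Finset.range n, |c j| * C j) * Real.exp (d * y) := by
      rw [Finset.sum_mul]
      refine Finset.sum_le_sum fun j _ => ?_
      rw [abs_mul, mul_assoc]
      exact mul_le_mul_of_nonneg_left (hCf j y hy) (abs_nonneg _)
    have := Real.exp_pos (d * y)
    linarith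

theorem bPsi_le {ν : ℝ} {N : ℕ} (a : Fin N → ℝ) (ℓ : Fin N) (t : ℝ) {d : ℝ} (hd : 0 < d) :
    ∃ C : ℝ, 0 < C ∧ ∀ y : ℝ, 0 < y → |bPsi ν a ℓ t y| ≤ C * Real.exp (d * y) := by
  unfold bPsi bU
  exact expB_sum N _ _ fun n => expB_sum (n+1) _ _ fun j => expB_pow hd j

theorem bPsi_measurable {ν : ℝ} {N : ℕ} (a : Fin N → ℝ) (ℓ : Fin N) (t : ℝ) : Measurable (bPsi ν a ℓ t) := by
  unfold bPsi bU
  fun_prop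

theorem bP_le {ν : ℝ} (hν : -1 < ν) {τ c d : ℝ} (hτ : 0 < τ) (hc : 0 < c) (hd : 0 < d)
    (h : 1 / (2 * d) + τ < 1 / (2 * c)) :
    ∃ C : ℝ, 0 < C ∧ ∀ x y : ℝ, 0 < x → 0 < y → bP ν τ x y ≤ C * (x ^ ν * Real.exp (-(c * x))) * Real.exp (d * y) := by
  obtain ⟨C0, hC0, hF⟩ := bF_le hν
  have hcd : 0 < 1 / (2 * d) := by positivity
  set L := 1 - 2 * c * τ with hL
  have hcτ : 2 * c * (1 / (2 * d) + τ) < 1 := by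
    have := mul_lt_mul_of_pos_left h (by positivity : 0 < 2 * c)
    rwa [mul_one_div_cancel (by positivity)] at this
  have hLpos : 0 < L := by
    have : 0 < 2 * c * (1 / (2 * d)) := by positivity
    rw [hL]; nlinarith
  -- exponent of y after using bF_le
  set e := 1 / (2 * τ * L) - 1 / (2 * τ) with he
  have hee : e < d := by
    have h1 : e = c / L := by
      rw [he]
      field_simp
      rw [hL]; ring
    rw [h1, div_lt_iff₀ hLpos]
    have h2 : d * (2 * c * (1 / (2 * d))) = c := by field_simp
    have h3 := mul_lt_mul_of_pos_left hcτ hd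
    rw [hL]; nlinarith
  set ε := d - e with hε
  have hεp : 0 < ε := by rw [hε]; linarith
  set w := 1 / (2 * τ * L) with hw
  have hwp : 0 < w := by positivity
  obtain ⟨C1, hC1, h1⟩ := expB_pow hεp 1
  refine ⟨(1 / (2 * τ)) ^ (ν + 1) * C0 * (1 + w * C1), ?_, fun x y hx hy => ?_⟩
  · have h4 := Real.rpow_pos_of_pos (by positivity : 0 < 1 / (2 * τ)) (ν + 1)
    positivity
  have hb := hF (L * x / (2 * τ)) (w * y) (by positivity) (by positivity)
  have e1 : L * x / (2 * τ) * (w * y) = x * y / (4 * τ ^ 2) := by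
    rw [hw]; field_simp; norm_num
  rw [e1] at hb
  have hlin : 1 + w * y ≤ (1 + w * C1) * Real.exp (ε * y) := by
    have := h1 y hy
    rw [pow_one, abs_of_pos hy] at this
    have h5 : 1 ≤ Real.exp (ε * y) := Real.one_le_exp (by positivity)
    have := mul_le_mul_of_nonneg_left this hwp.le
    linarith
  have h4 := Real.rpow_pos_of_pos (by positivity : 0 < 1 / (2 * τ)) (ν + 1)
  have h5 := Real.rpow_pos_of_pos hx ν
  have hex : Real.exp (-((x + y) / (2 * τ))) * (Real.exp (L * x / (2 * τ)) * (Real.exp (ε * y) * Real.exp (w * y)))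
      = Real.exp (-(c * x)) * Real.exp (d * y) := by
    rw [← Real.exp_add, ← Real.exp_add, ← Real.exp_add, ← Real.exp_add]
    congr 1
    rw [hε, he, hL]; field_simp; ring
  unfold bP
  calc _ ≤ (1 / (2 * τ)) ^ (ν + 1) * x ^ ν * Real.exp (-((x + y) / (2 * τ))) *
        (C0 * (Real.exp (L * x / (2 * τ)) * (((1 + w * C1) * Real.exp (ε * y)) * Real.exp (w * y)))) := by
        refine mul_le_mul_of_nonneg_left (hb.trans ?_) (by positivity)
        gcongr
    _ = (1 / (2 * τ)) ^ (ν + 1) * C0 * (1 + w * C1) * x ^ ν * (Real.exp (-((x + y) / (2 * τ))) *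
        (Real.exp (L * x / (2 * τ)) * (Real.exp (ε * y) * Real.exp (w * y)))) := by ring
    _ = _ := by rw [hex]; ring


theorem em_bound {ι : Type*} [Finite ι] (Q : ι → ℝ → Prop) (hQ : ∀ i, ∃ C : ℝ, Q i C)
    (hm : ∀ i C C', C ≤ C' → Q i C → Q i C') : ∃ C : ℝ, 1 ≤ C ∧ ∀ i, Q i C := by
  choose c hc using hQ
  obtain ⟨B, hB⟩ := (Set.finite_range c).bddAbove
  exact ⟨max B 1, le_max_right _ _, fun i => hm i _ _ ((hB ⟨i, rfl⟩).trans (le_max_left _ _)) (hc i)⟩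

theorem besq_EMHyp {ν : ℝ} (hν : -1 < ν) {N M : ℕ} (a : Fin N → ℝ) (hapos : ∀ ℓ, 0 < a ℓ)
    (ha : Function.Injective a) (t : Fin M → ℝ) (htpos : ∀ m, 0 < t m) (htm : StrictMono t) :
    ∃ f g : Fin M → ℝ → ℝ, EMHyp (volume.restrict (Set.Ioi (0:ℝ))) (Set.Ioi 0)
      (fun m ℓ x => bP ν (t m) x (a ℓ)) (fun m ℓ y => bPsi ν a ℓ (t m) y)
      (fun m n x y => bP ν (t m - t n) x y) f g := by
  set u : Fin M → ℝ := fun m => t m + 2 * ((m : ℕ) : ℝ) + 1 with hu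
  set w : Fin M → ℝ := fun m => t m + 2 * ((m : ℕ) : ℝ) + 2 with hw
  have hup : ∀ m, 0 < u m := fun m => by have := htpos m; simp only [hu]; positivity
  have hwp : ∀ m, 0 < w m := fun m => by have := htpos m; simp only [hw]; positivity
  have huw : ∀ m, u m < w m := fun m => by simp only [hu, hw]; linarith
  obtain ⟨C1, hC1, h1⟩ := em_bound (ι := Fin M × Fin N) (fun i C => ∀ x : ℝ, 0 < x →
      |bP ν (t i.1) x (a i.2)| ≤ C * (x ^ ν * Real.exp (-(1 / (2 * u i.1) * x)))) (fun i => by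
      have hm : (0:ℝ) ≤ ((i.1 : ℕ) : ℝ) := Nat.cast_nonneg _
      obtain ⟨C, hC, h⟩ := bP_le hν (τ := t i.1) (c := 1 / (2 * u i.1)) (d := 1) (htpos _)
        (by have := hup i.1; positivity) one_pos (by
          have := hup i.1
          rw [show 1 / (2 * (1 / (2 * u i.1))) = u i.1 by field_simp]
          simp only [hu]; linarith)
      refine ⟨C * Real.exp (1 * a i.2), fun x hx => ?_⟩
      rw [abs_of_nonneg (bP_nonneg hν (htpos _) hx (hapos _))]
      refine (h x (a i.2) hx (hapos _)).trans (le_of_eq ?_)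
      ring) (fun i C C' hCC h x hx => (h x hx).trans (mul_le_mul_of_nonneg_right hCC (by
        have := Real.rpow_pos_of_pos hx ν
        positivity)))
  obtain ⟨C2, hC2, h2⟩ := em_bound (ι := Fin M × Fin N) (fun i C => ∀ y : ℝ, 0 < y →
      |bPsi ν a i.2 (t i.1) y| ≤ C * Real.exp (1 / (2 * w i.1) * y)) (fun i => by
      obtain ⟨C, hC, h⟩ := bPsi_le (ν := ν) a i.2 (t i.1) (d := 1 / (2 * w i.1)) (by have := hwp i.1; positivity)
      exact ⟨C, h⟩) (fun i C C' hCC h x hx => (h x hx).trans (mul_le_mul_of_nonneg_right hCC (by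
        positivity)))
  obtain ⟨C3, hC3, h3⟩ := em_bound (ι := Fin M × Fin M) (fun i C => i.2 < i.1 → ∀ x y : ℝ, 0 < x → 0 < y →
      |bP ν (t i.1 - t i.2) x y| ≤ C * (x ^ ν * Real.exp (-(1 / (2 * u i.1) * x))) * Real.exp (1 / (2 * w i.2) * y))
      (fun i => by
      by_cases hi : i.2 < i.1
      · have hτ : 0 < t i.1 - t i.2 := sub_pos.2 (htm hi)
        obtain ⟨C, hC, h⟩ := bP_le hν (τ := t i.1 - t i.2) (c := 1 / (2 * u i.1)) (d := 1 / (2 * w i.2)) hτ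
          (by have := hup i.1; positivity) (by have := hwp i.2; positivity) (by
            have := hup i.1
            have := hwp i.2
            rw [show 1 / (2 * (1 / (2 * u i.1))) = u i.1 by field_simp,
              show 1 / (2 * (1 / (2 * w i.2))) = w i.2 by field_simp]
            have : ((i.2 : ℕ) : ℝ) + 1 ≤ ((i.1 : ℕ) : ℝ) := by exact_mod_cast hi
            simp only [hu, hw]; linarith)
        refine ⟨C, fun _ x y hx hy => ?_⟩
        rw [abs_of_nonneg (bP_nonneg hν hτ hx hy)]
        exact h x y hx hy
      · exact ⟨0, fun h => absurd h hi⟩)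
      (fun i C C' hCC h hi x y hx hy => (h hi x y hx hy).trans (by
        have := Real.rpow_pos_of_pos hx ν
        gcongr))
  set C := C1 + C2 + C3 with hC
  have c1 : C1 ≤ C := by linarith
  have c2 : C2 ≤ C := by linarith
  have c3 : C3 ≤ C * C := by nlinarith
  have hC0 : 0 ≤ C := by linarith
  refine ⟨fun m x => C * (x ^ ν * Real.exp (-(1 / (2 * u m) * x))), fun m y => C * Real.exp (1 / (2 * w m) * y), ?_⟩
  refine
   { hS := ae_restrict_mem measurableSet_Ioi
     f_nonneg := ?_
     g_nonneg := fun m x _ => by positivity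
     φ_le := ?_
     ψ_le := ?_
     P_le := ?_
     fg_int := ?_
     φ_meas := fun m ℓ => (bP_measurable hν (t m)).comp measurable_prodMk_right
     ψ_meas := fun m ℓ => bPsi_measurable a ℓ (t m)
     P_meas := fun m n => bP_measurable hν _
     h1 := ?_
     h2 := ?_
     h3 := ?_
     h4 := ?_ }
  · intro m x hx
    have := Real.rpow_pos_of_pos hx ν
    positivity
  · intro m ℓ x hx
    refine (h1 (m, ℓ) x hx).trans (mul_le_mul_of_nonneg_right c1 ?_)
    have := Real.rpow_pos_of_pos hx ν
    positivity
  · intro m ℓ x hx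
    exact (h2 (m, ℓ) x hx).trans (mul_le_mul_of_nonneg_right c2 (by positivity))
  · intro m n hmn x hx y hy
    have := Real.rpow_pos_of_pos hx ν
    refine (h3 (m, n) hmn x y hx hy).trans ?_
    simp only
    calc _ ≤ (C * C) * (x ^ ν * Real.exp (-(1 / (2 * u m) * x))) * Real.exp (1 / (2 * w n) * y) := by
          gcongr
      _ = _ := by ring
  · intro m
    have hpos : 0 < 1 / (2 * u m) - 1 / (2 * w m) := by
      have := hup m
      have := huw m
      exact sub_pos.2 (one_div_lt_one_div_of_lt (by positivity) (by linarith))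
    have h := (bMom_pow hν hpos 0).1.const_mul (C * C)
    refine h.congr (Filter.Eventually.of_forall fun x => ?_)
    simp only [pow_zero, mul_one]
    rw [show -((1 / (2 * u m) - 1 / (2 * w m)) * x) = -(1 / (2 * u m) * x) + 1 / (2 * w m) * x by ring, Real.exp_add]
    ring
  · intro m k ℓ
    rw [bPsi_int hν a ℓ (t m) (htpos m), sub_self, bPsi_zero hν a ha]
  · intro m n hmn ℓ x hx
    rw [bP_CK hν (sub_pos.2 (htm hmn)) (htpos n) hx (hapos ℓ), sub_add_cancel]
  · intro m n hmn ℓ y hy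
    rw [bPsi_int hν a ℓ (t m) (sub_pos.2 (htm hmn)), sub_sub_cancel]
  · intro m r n hnr hrm x hx y hy
    rw [bP_CK hν (sub_pos.2 (htm hrm)) (sub_pos.2 (htm hnr)) hx hy, sub_add_sub_cancel]


def emE (N M : ℕ) (Nm : ℕ → ℕ) (hNm : ∀ m : Fin M, Nm m ≤ N) :
    Fin M × Fin N ≃ ((m : Fin M) × Fin (Nm m)) ⊕ ((m : Fin M) × Fin (N - Nm m)) where
  toFun p := if h : (p.2 : ℕ) < Nm p.1 then Sum.inl ⟨p.1, ⟨p.2, h⟩⟩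
    else Sum.inr ⟨p.1, ⟨(p.2 : ℕ) - Nm p.1, by have := p.2.isLt; omega⟩⟩
  invFun := Sum.elim (fun s => (s.1, ⟨s.2, lt_of_lt_of_le s.2.isLt (hNm s.1)⟩))
    (fun s => (s.1, ⟨Nm s.1 + s.2, by have := s.2.isLt; omega⟩))
  left_inv p := by
    obtain ⟨m, i⟩ := p
    by_cases h : (i : ℕ) < Nm m
    · simp [h]
    · simp only [h, dite_false, Sum.elim_inr]
      exact Prod.ext rfl (Fin.ext (Nat.add_sub_cancel' (not_lt.1 h)))
  right_inv s := by
    rcases s with ⟨m, i⟩ | ⟨m, i⟩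
    · simp
    · simp

theorem emCnt_sigma {M : ℕ} (k : Fin M → ℕ) (r : Fin M) :
    emCnt (fun s : (m : Fin M) × Fin (k m) => s.1) r = k r := by
  unfold emCnt
  rw [Fintype.sum_sigma]
  have h : ∀ m : Fin M, (∑ _i : Fin (k m), if m = r then 1 else 0) = if m = r then k m else 0 := by
    intro m
    split_ifs <;> simp
  simp only [h]
  simp

theorem multitime_correlation_determinantal
    (ν : ℝ) (hν : -1 < ν) (N : ℕ) (hN : 1 ≤ N)
    (a : Fin N → ℝ) (hapos : ∀ ℓ, 0 < a ℓ) (hamono : StrictMono a)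
    (M : ℕ) (hM : 1 ≤ M) (t : ℕ → ℝ)
    (ht0 : 0 < t 0) (htmono : ∀ m, m + 1 < M → t m < t (m + 1))
    (Nm : ℕ → ℕ) (hNm : ∀ m < M, 1 ≤ Nm m ∧ Nm m ≤ N)
    (x : ℕ → ℕ → ℝ)
    (hxpos : ∀ m < M, ∀ i < Nm m, 0 < x m i)
    (hxdist : ∀ m < M, ∀ i < Nm m, ∀ j < Nm m, i ≠ j → x m i ≠ x m j) :
    (∏ m ∈ Finset.range M, (1 / (N - Nm m).factorial : ℝ)) *
        ∫ z in Set.univ.pi (fun _ : (m : Fin M) × Fin (N - Nm m) => Set.Ioi (0 : ℝ)),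
          (vdm (fullConfig N M Nm x z ⟨M - 1, by omega⟩) *
            (∏ m : Fin (M - 1),
              Matrix.det (Matrix.of fun i j : Fin N =>
                besqP ν (t ((m : ℕ) + 1) - t m)
                  (fullConfig N M Nm x z ⟨(m : ℕ) + 1, by have := m.isLt; omega⟩ i)
                  (fullConfig N M Nm x z ⟨(m : ℕ), by have := m.isLt; omega⟩ j))) *
            Matrix.det (Matrix.of fun i j : Fin N =>
              besqP ν (t 0) (fullConfig N M Nm x z ⟨0, by omega⟩ i) (a j)) /
            vdm a)
      = Matrix.det (Matrix.of
          fun p q : (m : Fin M) × Fin (Nm m) =>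
            corrK ν a (t p.1) (x p.1 p.2) (t q.1) (x q.1 q.2)) := by
  obtain ⟨M, rfl⟩ : ∃ M', M = M' + 1 := ⟨M - 1, by omega⟩
  have ha := hamono.injective
  -- times
  have htm : StrictMono (fun m : Fin (M+1) => t m) := by
    rw [Fin.strictMono_iff_lt_succ]
    intro i
    exact htmono i (by have := i.isLt; omega)
  have htpos : ∀ m : Fin (M+1), 0 < t m := by
    intro m
    have := htm.monotone (Fin.zero_le m)
    exact lt_of_lt_of_le ht0 this
  have hva : vdm a ≠ 0 := by
    rw [vdm_eq]
    exact Matrix.det_vandermonde_ne_zero_iff.2 ha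
  obtain ⟨f, g, H⟩ := besq_EMHyp hν a hapos ha (fun m : Fin (M+1) => t m) htpos htm
  have hNm' : ∀ m : Fin (M+1), Nm m ≤ N := fun m => (hNm m m.isLt).2
  set pt : ((m : Fin (M+1)) × Fin (Nm m)) → Fin (M+1) × ℝ := fun s => (s.1, x s.1 s.2) with hptd
  have hpt : ∀ s, (pt s).2 ∈ Set.Ioi (0:ℝ) := fun s => hxpos s.1 s.1.isLt s.2 s.2.isLt
  have key := H.integral_gen pt hpt (fun s : (m : Fin (M+1)) × Fin (N - Nm m) => s.1)
  set φ : Fin (M+1) → Fin N → ℝ → ℝ := fun m ℓ x => bP ν (t m) x (a ℓ) with hφ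
  set ψ : Fin (M+1) → Fin N → ℝ → ℝ := fun m ℓ y => bPsi ν a ℓ (t m) y with hψ
  set P : Fin (M+1) → Fin (M+1) → ℝ → ℝ → ℝ := fun m n x y => bP ν (t m - t n) x y with hP
  -- right side
  have hright : (Matrix.of fun p q : (m : Fin (M+1)) × Fin (Nm m) =>
            corrK ν a (t p.1) (x p.1 p.2) (t q.1) (x q.1 q.2)) = emMat φ ψ P pt := by
    ext p q
    have hp : 0 < x p.1 p.2 := hpt p
    have hq : 0 < x q.1 q.2 := hpt q
    simp only [Matrix.of_apply, emMat, emK, corrK, hptd, hφ, hψ, hP]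
    congr 1
    · refine Finset.sum_congr rfl fun ℓ _ => ?_
      rw [besqP_eq ν (htpos p.1) hp (hapos ℓ), bPsi_eq_int hν a ℓ (htpos q.1) hq]
    · have hiff : t q.1 < t p.1 ↔ q.1 < p.1 := htm.lt_iff_lt
      by_cases h : q.1 < p.1
      · rw [if_pos h, if_pos (hiff.2 h), besqP_eq ν (sub_pos.2 (hiff.2 h)) hp hq]
      · rw [if_neg h, if_neg (fun h' => h (hiff.1 h'))]
  -- integrand
  have hIntg : ∀ z ∈ Set.univ.pi (fun _ : (m : Fin (M+1)) × Fin (N - Nm m) => Set.Ioi (0 : ℝ)),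
      (vdm (fullConfig N (M+1) Nm x z ⟨M + 1 - 1, by omega⟩) *
            (∏ m : Fin (M + 1 - 1),
              Matrix.det (Matrix.of fun i j : Fin N =>
                besqP ν (t ((m : ℕ) + 1) - t m)
                  (fullConfig N (M+1) Nm x z ⟨(m : ℕ) + 1, by have := m.isLt; omega⟩ i)
                  (fullConfig N (M+1) Nm x z ⟨(m : ℕ), by have := m.isLt; omega⟩ j))) *
            Matrix.det (Matrix.of fun i j : Fin N =>
              besqP ν (t 0) (fullConfig N (M+1) Nm x z ⟨0, by omega⟩ i) (a j)) /
            vdm a) = (emMat φ ψ P (Sum.elim pt (fun b => (b.1, z b)))).det := by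
    intro z hz
    set X := fullConfig N (M+1) Nm x z with hX
    have hXpos : ∀ m i, 0 < X m i := by
      intro m i
      simp only [hX, fullConfig]
      split_ifs with h
      · exact hxpos m m.isLt i h
      · exact hz _ (Set.mem_univ _)
    have hsub : (emMat φ ψ P (Sum.elim pt (fun b => (b.1, z b)))).submatrix (emE N (M+1) Nm hNm') (emE N (M+1) Nm hNm')
        = Matrix.of fun p q : Fin (M+1) × Fin N =>
      (∑ ℓ, (Matrix.of fun i ℓ : Fin N => φ p.1 ℓ (X p.1 i)) p.2 ℓ * (Matrix.of fun ℓ j : Fin N => ψ q.1 ℓ (X q.1 j)) ℓ q.2)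
        - if q.1 < p.1 then (Matrix.of fun i j : Fin N => P p.1 q.1 (X p.1 i) (X q.1 j)) p.2 q.2 else 0 := by
      have hE : ∀ p, Sum.elim pt (fun b : (m : Fin (M+1)) × Fin (N - Nm m) => (b.1, z b)) (emE N (M+1) Nm hNm' p) = (p.1, X p.1 p.2) := by
        intro p
        simp only [emE, Equiv.coe_fn_mk, hX, fullConfig]
        split_ifs with h
        · rfl
        · rfl
      ext p q
      simp only [Matrix.submatrix_apply, emMat, Matrix.of_apply, hE, emK]
    rw [← Matrix.det_submatrix_equiv_self (emE N (M+1) Nm hNm'), hsub,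
      em_det_full (fun m => Matrix.of fun i ℓ : Fin N => φ m ℓ (X m i)) (fun m => Matrix.of fun ℓ j : Fin N => ψ m ℓ (X m j))
        (fun m n => Matrix.of fun i j : Fin N => P m n (X m i) (X n j))]
    have d1 := bPsi_det hν a ha (t M) (X (Fin.last M))
    have d2 : (∏ m : Fin M,
              Matrix.det (Matrix.of fun i j : Fin N =>
                besqP ν (t ((m : ℕ) + 1) - t m)
                  (X ⟨(m : ℕ) + 1, by have := m.isLt; omega⟩ i)
                  (X ⟨(m : ℕ), by have := m.isLt; omega⟩ j))) =
        ∏ m : Fin M, (Matrix.of fun i j : Fin N => P m.succ m.castSucc (X m.succ i) (X m.castSucc j)).det := by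
      refine Finset.prod_congr rfl fun m _ => ?_
      congr 1
      ext i j
      exact besqP_eq ν (sub_pos.2 (htm (Fin.castSucc_lt_succ (i := m)))) (hXpos m.succ i) (hXpos m.castSucc j)
    have d3 : Matrix.det (Matrix.of fun i j : Fin N => besqP ν (t 0) (X ⟨0, by omega⟩ i) (a j)) =
        (Matrix.of fun i ℓ : Fin N => φ 0 ℓ (X 0 i)).det := by
      congr 1
      ext i j
      exact besqP_eq ν ht0 (hXpos 0 i) (hapos j)
    rw [d3]
    have d1' : vdm (X ⟨M + 1 - 1, by omega⟩) = (Matrix.of fun ℓ j : Fin N => ψ (Fin.last M) ℓ (X (Fin.last M) j)).det * vdm a := d1.symm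
    rw [d1']
    refine Eq.trans ?_ (mul_div_cancel_right₀ _ hva)
    refine congrArg (· / vdm a) ?_
    rw [← d2]
    change _ * (∏ m : Fin M, _) * _ = _
    ring
  rw [hright, setIntegral_congr_fun (MeasurableSet.univ_pi fun _ => measurableSet_Ioi) hIntg]
  rw [volume_pi, Measure.restrict_pi_pi]
  rw [key, ← mul_assoc]
  have hconst : (∏ m ∈ Finset.range (M+1), (1 / (N - Nm m).factorial : ℝ)) *
      (∏ r : Fin (M+1), ∏ j ∈ Finset.range (emCnt (fun s : (m : Fin (M+1)) × Fin (N - Nm m) => s.1) r),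
        ((N : ℝ) - emCnt (fun i => (pt i).1) r - j)) = 1 := by
    rw [Finset.prod_range, ← Finset.prod_mul_distrib]
    refine Finset.prod_eq_one fun r _ => ?_
    rw [emCnt_sigma (fun m : Fin (M+1) => N - Nm m) r, emCnt_sigma (fun m : Fin (M+1) => Nm m) r]
    have : ∀ k : ℕ, ∏ j ∈ Finset.range k, ((k:ℝ) - j) = k.factorial := by
      intro k
      rw [← Finset.prod_range_add_one_eq_factorial, ← Finset.prod_range_reflect]
      push_cast
      refine Finset.prod_congr rfl fun j hj => ?_
      have := Finset.mem_range.1 hj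
      rw [Nat.sub_sub, Nat.cast_sub (by omega)]
      push_cast; ring
    have h2 := this (N - Nm r)
    rw [Nat.cast_sub (hNm' r)] at h2
    rw [h2]
    have : ((N - Nm r).factorial : ℝ) ≠ 0 := by positivity
    field_simp
  rw [hconst, one_mul]
end
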